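/- arXiv:1406.6386 — 2 statements merged into one kernel-verified Lean document; each statement's English description precedes it below -/
import Mathlib

section
/- If 𝒜 is an uncountable analytic almost disjoint family of subsets of a countable set N, then there exist injective functions u : 2^{<ω} → N and a : 2^ω → 𝒜 such that (1) u(b_x) ⊆ a(x) for every x ∈ 2^ω, and (2) u(c) ∈ 𝒜^⊥ for every c ⊆ 2^{<ω} with c ∩ b_x finite for every x ∈ 2^ω. -/
open Set

/-- `a ⊆* b`: all but finitely many elements of `a` belong to `b`. -/
def AlmostSub {N : Type*} (a b : Set N) : Prop := (a \ b).Finite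

/-- Two families of sets are orthogonal if any two members intersect in a finite set. -/
def OrthFam {N : Type*} (I J : Set (Set N)) : Prop := ∀ x ∈ I, ∀ y ∈ J, (x ∩ y).Finite

/-- The families `Γ i` are separated if there are sets `a i` with `x ⊆* a i` for
every `x ∈ Γ i` and `⋂ i, a i` finite. -/
def SepFam {N ι : Type*} (Γ : ι → Set (Set N)) : Prop :=
  ∃ a : ι → Set N, (∀ i, ∀ x ∈ Γ i, (x \ a i).Finite) ∧ (⋂ i, a i).Finite

/-- The families `Γ i` are countably separated. -/
def CSepFam {N ι : Type*} (Γ : ι → Set (Set N)) : Prop :=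
  ∃ C : Set (Set N), C.Countable ∧ ∀ x : ι → Set N, (∀ i, x i ∈ Γ i) →
    ∃ c : ι → Set N, (∀ i, c i ∈ C) ∧ (∀ i, x i ⊆ c i) ∧ (⋂ i, c i) = ∅

/-- A family is infinitely hereditary if every infinite subset of a member is a member. -/
def HerFam {N : Type*} (I : Set (Set N)) : Prop := ∀ x ∈ I, ∀ y ⊆ x, y.Infinite → y ∈ I

/-- `Γ` is an `n∗`-gap. -/
def NStarGap {N ι : Type*} (Γ : ι → Set (Set N)) : Prop :=
  (∀ x : ι → Set N, (∀ i, x i ∈ Γ i) → (⋂ i, x i).Finite) ∧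
  ¬ SepFam Γ ∧ (∀ i, HerFam (Γ i))

/-- `Γ` is an `n`-gap: an `n∗`-gap with pairwise orthogonal families. -/
def NGap {N ι : Type*} (Γ : ι → Set (Set N)) : Prop :=
  NStarGap Γ ∧ ∀ i j, i ≠ j → OrthFam (Γ i) (Γ j)

/-- The orthogonal of a family of sets. -/
def orthFamC {N : Type*} (I : Set (Set N)) : Set (Set N) := {y | ∀ x ∈ I, (x ∩ y).Finite}

/-- A family of subsets of `N`, viewed as a subset of the Cantor space `2^N`,
is analytic. -/
def AnalyticFam {N : Type*} (Γ : Set (Set N)) : Prop :=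
  MeasureTheory.AnalyticSet {f : N → Bool | {x | f x = true} ∈ Γ}

/-- A family of subsets of `N`, viewed as a subset of the Cantor space `2^N`, is closed. -/
def ClosedFam {N : Type*} (Γ : Set (Set N)) : Prop :=
  IsClosed {f : N → Bool | {x | f x = true} ∈ Γ}

/-- The order `≤` between multiple gaps: an injection preserving the families
and their orthogonals. -/
def GapLE {A B ι : Type*} (Γ : ι → Set (Set A)) (Δ : ι → Set (Set B)) : Prop :=
  ∃ φ : A → B, Function.Injective φ ∧ ∀ i,
    (∀ x ∈ Γ i, φ '' x ∈ Δ i) ∧ (∀ y ∈ orthFamC (Γ i), φ '' y ∈ orthFamC (Δ i))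

/-- `X` is an `i`-chain in the `n`-adic tree: `X = {x₀,x₁,…}` with `x_k⌢i ≤ x_{k+1}`. -/
def IChain {n : ℕ} (i : Fin n) (X : Set (List (Fin n))) : Prop :=
  ∃ x : ℕ → List (Fin n), X = Set.range x ∧ ∀ k, (x k ++ [i]) <+: x (k + 1)

/-- `X` is an `[i]`-chain in the `n`-adic tree: `X = {x₀,x₁,…}` with
`x_{k+1} = x_k⌢i⌢w_k` where all entries of `w_k` are `≤ i`. -/
def BChain {n : ℕ} (i : Fin n) (X : Set (List (Fin n))) : Prop :=
  ∃ x : ℕ → List (Fin n), X = Set.range x ∧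
    ∀ k, ∃ w : List (Fin n), (∀ j ∈ w, j ≤ i) ∧ x (k + 1) = x k ++ i :: w

/-- The branch of the dyadic tree determined by x ∈ 2^ω: the set of its finite
initial segments. -/
def branch (x : ℕ → Bool) : Set (List Bool) :=
  Set.range fun k : ℕ => List.ofFn fun i : Fin k => x i

/-!
Parametrize `𝒜` continuously by the Baire space. A perfect-set argument produces an injective tree
of points `w s` of `N` and members `F (ζ x)` of `𝒜` whose traces on this tree are exactly the
branches; so every other member has finite intersection with each branch. It remains to thin the
tree out, keeping a copy of the dyadic tree, until the trace of every member of `𝒜` is tame on both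
sides: along each branch, the trace meets only finitely many of the cones that leave the branch
on a given side. A set that is tame on both sides and meets every branch in a finite set is finite,
by König's lemma.

To make all traces `i`-tame, suppose that no copy of the tree works. Such failures are robust: by a
fusion argument, for every ideal-valued assignment `t ↦ K t` there is a copy of the tree in which
either all the sets opposite to `t` lie in `K t`, or no branching set opposite to `t` does,
uniformly in the nodes `t`; here a set is opposite to `t` if it lies on the other side of a node
above which `t` turns to `i`. Hence a failing set of parameters can be cut down to the parameters
whose member contains a given node, or split by whether it does, and still fail. One splitting,
followed by infinitely many common cuts of the two halves, leads to two parameters whose members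
are distinct but have infinite intersection.
-/

/-! ### The dyadic tree -/

/-- The initial segment of length `n` of `x`, a node of the dyadic tree. -/
def initSeg (x : ℕ → Bool) (n : ℕ) : List Bool := List.ofFn fun i : Fin n => x i

/-- The set of nodes of the dyadic tree that extend `w`. -/
def cone (w : List Bool) : Set (List Bool) := {t | w <+: t}

section Tree

variable {s t r w p : List Bool} {i j : Bool} {x y : ℕ → Bool}

@[simp] lemma length_initSeg (x : ℕ → Bool) (n : ℕ) : (initSeg x n).length = n := by
  simp [initSeg]

lemma initSeg_succ (x : ℕ → Bool) (n : ℕ) : initSeg x (n + 1) = initSeg x n ++ [x n] := by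
  simp [-List.ofFn_succ, initSeg, List.ofFn_succ_last]

lemma initSeg_prefix_initSeg (x : ℕ → Bool) {m n : ℕ} (h : m ≤ n) :
    initSeg x m <+: initSeg x n := by
  induction n, h using Nat.le_induction with
  | base => exact List.prefix_rfl
  | succ n _ ih => exact ih.trans (initSeg_succ x n ▸ List.prefix_append _ _)

lemma mem_branch_iff : t ∈ branch x ↔ initSeg x t.length = t := by
  refine ⟨?_, fun h => ⟨_, h⟩⟩
  rintro ⟨n, rfl⟩
  exact congrArg (initSeg x) (length_initSeg x n)

lemma initSeg_mem_branch (x : ℕ → Bool) (n : ℕ) : initSeg x n ∈ branch x := ⟨n, rfl⟩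

lemma isChain_branch (x : ℕ → Bool) : IsChain (· <+: ·) (branch x) := by
  rintro _ ⟨m, rfl⟩ _ ⟨n, rfl⟩ -
  exact (le_total m n).imp (initSeg_prefix_initSeg x) (initSeg_prefix_initSeg x)

lemma eq_of_branch_subset (h : branch x ⊆ branch y) : x = y := by
  funext n
  have hn := mem_branch_iff.1 (h (initSeg_mem_branch x (n + 1)))
  rw [length_initSeg, initSeg_succ, initSeg_succ] at hn
  simpa using (List.append_inj' hn rfl).2.symm

lemma eq_of_concat_prefix (hi : w ++ [i] <+: t) (hj : w ++ [j] <+: t) : i = j := by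
  have h : w ++ [i] = w ++ [j] :=
    (List.prefix_of_prefix_length_le hi hj (by simp)).eq_of_length (by simp)
  simpa using h

lemma prefix_iff_eq_or_concat_prefix : s <+: t ↔ s = t ∨ ∃ j, s ++ [j] <+: t := by
  constructor
  · rintro ⟨_ | ⟨j, r⟩, rfl⟩
    · simp
    · exact .inr ⟨j, r, by simp⟩
  · rintro (rfl | ⟨j, h⟩)
    · exact List.prefix_rfl
    · exact (List.prefix_append s [j]).trans h

lemma prefix_of_split (hs : p <+: s) (ht : p <+: t) (hi : w ++ [i] <+: s)
    (hi' : w ++ [!i] <+: t) : p <+: w := by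
  rcases List.prefix_or_prefix_of_prefix hs ((List.prefix_append w [i]).trans hi) with h | h
  · exact h
  · rcases prefix_iff_eq_or_concat_prefix.1 h with rfl | ⟨j, h⟩
    · exact List.prefix_rfl
    · have hj := eq_of_concat_prefix hi (h.trans hs)
      simpa [hj] using eq_of_concat_prefix hi' (h.trans ht)

lemma split_unique (hs : w ++ [i] <+: s) (ht : w ++ [!i] <+: t) (hs' : p ++ [j] <+: s)
    (ht' : p ++ [!j] <+: t) : w = p :=
  antisymm (r := (· <+: ·))
    (prefix_of_split ((List.prefix_append w _).trans hs) ((List.prefix_append w _).trans ht)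
      hs' ht')
    (prefix_of_split ((List.prefix_append p _).trans hs') ((List.prefix_append p _).trans ht')
      hs ht)

lemma exists_split (hst : ¬ s <+: t) (hts : ¬ t <+: s) :
    ∃ w i, w ++ [i] <+: s ∧ w ++ [!i] <+: t := by
  induction s generalizing t with
  | nil => exact absurd List.nil_prefix hst
  | cons a s ih =>
    rcases t with _ | ⟨b, t⟩
    · exact absurd List.nil_prefix hts
    · by_cases hab : a = b
      · subst hab
        simp only [List.cons_prefix_cons, true_and] at hst hts
        obtain ⟨w, i, hs, ht⟩ := ih hst hts
        exact ⟨a :: w, i, by simpa using hs, by simpa using ht⟩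
      · exact ⟨[], a, by simp, by simpa using Bool.not_eq.2 hab⟩

lemma exists_branch_superset_of_isChain {S : Set (List Bool)} (hS : IsChain (· <+: ·) S) :
    ∃ x, S ⊆ branch x := by
  classical
  refine ⟨fun n => decide (∃ s ∈ S, s[n]? = some true), fun t ht => mem_branch_iff.2 ?_⟩
  refine List.ext_getElem (length_initSeg _ _) fun n _ hn => ?_
  have hsome : ∀ s ∈ S, s[n]? = some true → t[n] = true := fun s hs hsn => by
    obtain ⟨hn', hsn⟩ := List.getElem?_eq_some_iff.1 hsn
    rw [← hsn]
    rcases hS.total hs ht with h | h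
    · exact (h.getElem hn').symm
    · exact h.getElem hn
  simp only [initSeg, List.getElem_ofFn]
  rw [Bool.eq_iff_iff, decide_eq_true_iff]
  exact ⟨fun ⟨s, hs, hsn⟩ => hsome s hs hsn, fun h => ⟨t, ht, by simp [hn, h]⟩⟩

lemma exists_mem_branch (s : List Bool) : ∃ x, s ∈ branch x := by
  obtain ⟨x, hx⟩ := exists_branch_superset_of_isChain (IsChain.singleton (r := (· <+: ·)) (a := s))
  exact ⟨x, hx rfl⟩

lemma mem_branch_of_prefix (hst : s <+: t) (ht : t ∈ branch x) : s ∈ branch x := by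
  rw [mem_branch_iff] at ht ⊢
  exact (List.prefix_of_prefix_length_le (ht ▸ initSeg_prefix_initSeg x hst.length_le) hst
    (by simp)).eq_of_length (by simp)

lemma prefix_of_forall_mem_branch (h : ∀ x, s ∈ branch x → t ∈ branch x) : t <+: s := by
  by_contra hts
  have hj : ∀ j, s ++ [j] <+: t := fun j => by
    obtain ⟨x, hx⟩ := exists_mem_branch (s ++ [j])
    have hs := mem_branch_of_prefix (List.prefix_append s [j]) hx
    rcases (isChain_branch x).total hx (h x hs) with h' | h'
    · exact h'
    · rcases List.prefix_concat_iff.1 h' with rfl | h'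
      · exact List.prefix_rfl
      · exact absurd h' hts
  exact absurd (eq_of_concat_prefix (hj true) (hj false)) (by simp)

lemma exists_forall_initSeg {q : List Bool → Prop} (h0 : q [])
    (hq : ∀ w, q w → ∃ j, q (w ++ [j])) : ∃ x, ∀ n, q (initSeg x n) := by
  choose f hf using hq
  let g : ℕ → {w // q w} := fun n =>
    n.rec ⟨[], h0⟩ fun _ w => ⟨w.1 ++ [f w.1 w.2], hf w.1 w.2⟩
  let x : ℕ → Bool := fun n => f (g n).1 (g n).2
  have hg : ∀ n, initSeg x n = (g n).1 := fun n => by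
    induction n with
    | zero => rfl
    | succ n ih => rw [initSeg_succ, ih]
  exact ⟨x, fun n => hg n ▸ (g n).2⟩

lemma exists_concat_not_prefix {n : ℕ} (ht : initSeg x n <+: t) (hx : t ∉ branch x) :
    ∃ m ≥ n, initSeg x m ++ [!x m] <+: t := by
  classical
  by_contra! hm
  have hprefix : ∀ m ≥ n, initSeg x m <+: t := fun m hm' => by
    induction m, hm' using Nat.le_induction with
    | base => exact ht
    | succ m hm' ih =>
      rcases prefix_iff_eq_or_concat_prefix.1 ih with h | ⟨j, h⟩
      · exact absurd (h ▸ initSeg_mem_branch x m) hx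
      · rcases Bool.eq_or_eq_not j (x m) with rfl | rfl
        · rwa [initSeg_succ]
        · exact absurd h (hm m hm')
  have := (hprefix (n + t.length + 1) (by lia)).length_le
  rw [length_initSeg] at this
  lia

end Tree

/-- `v` embeds the dyadic tree into itself with splitting preserved: the children of `s` are sent
into the two cones above a common extension of `v s`, in the right order. -/
def IsDyadicEmbedding (v : List Bool → List Bool) : Prop :=
  ∀ s, ∃ w, v s <+: w ∧ ∀ j, w ++ [j] <+: v (s ++ [j])

namespace IsDyadicEmbedding

variable {v : List Bool → List Bool} {s t w : List Bool} {i : Bool}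

lemma prefix_apply (hv : IsDyadicEmbedding v) (h : s <+: t) : v s <+: v t := by
  obtain ⟨r, rfl⟩ := h
  induction r using List.reverseRecOn with
  | nil => simp
  | append_singleton r j ih =>
    obtain ⟨w, hw, hj⟩ := hv (s ++ r)
    rw [← List.append_assoc]
    exact ih.trans (hw.trans ((List.prefix_append w [j]).trans (hj j)))

lemma exists_forall_concat_prefix (hv : IsDyadicEmbedding v) (s : List Bool) :
    ∃ w, v s <+: w ∧ ∀ j t, s ++ [j] <+: t → w ++ [j] <+: v t :=
  (hv s).imp fun _ h => ⟨h.1, fun j _ ht => (h.2 j).trans (hv.prefix_apply ht)⟩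

lemma not_prefix_apply (hv : IsDyadicEmbedding v) (hs : w ++ [i] <+: s) (ht : w ++ [!i] <+: t) :
    ¬ v s <+: v t := by
  intro h
  obtain ⟨w', -, hw'⟩ := hv.exists_forall_concat_prefix w
  simpa using eq_of_concat_prefix ((hw' _ _ hs).trans h) (hw' _ _ ht)

lemma prefix_apply_iff (hv : IsDyadicEmbedding v) : v s <+: v t ↔ s <+: t := by
  refine ⟨fun h => ?_, hv.prefix_apply⟩
  by_contra hst
  by_cases hts : t <+: s
  · rcases prefix_iff_eq_or_concat_prefix.1 hts with rfl | ⟨j, hj⟩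
    · exact hst List.prefix_rfl
    · obtain ⟨w, hw, hw'⟩ := hv.exists_forall_concat_prefix t
      have := (((hw' j s hj).trans h).trans hw).length_le
      simp at this
  · obtain ⟨w, i, hs, ht⟩ := exists_split hst hts
    exact hv.not_prefix_apply hs ht h

lemma injective (hv : IsDyadicEmbedding v) : Function.Injective v := fun _ _ h =>
  (hv.prefix_apply_iff.1 (h ▸ List.prefix_rfl)).eq_of_length_le
    (hv.prefix_apply_iff.1 (h ▸ List.prefix_rfl)).length_le

lemma exists_split_index (hv : IsDyadicEmbedding v) (hs : w ++ [i] <+: v s)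
    (ht : w ++ [!i] <+: v t) : ∃ q, ∀ j r, w ++ [j] <+: v r ↔ q ++ [j] <+: r := by
  have hne : ∀ {a b k}, w ++ [k] <+: v a → w ++ [!k] <+: v b → ¬ a <+: b := fun ha hb hab => by
    simpa using eq_of_concat_prefix (ha.trans (hv.prefix_apply hab)) hb
  obtain ⟨q, k, hqs, hqt⟩ := exists_split (hne hs ht) (hne ht (by simpa using hs))
  obtain ⟨w', hqw, hq⟩ := hv.exists_forall_concat_prefix q
  obtain rfl : w = w' := split_unique hs ht (hq _ _ hqs) (hq _ _ hqt)
  refine ⟨q, fun j r => ⟨fun hr => ?_, hq j r⟩⟩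
  have hqr : q <+: r := hv.prefix_apply_iff.1 (hqw.trans ((List.prefix_append w [j]).trans hr))
  rcases prefix_iff_eq_or_concat_prefix.1 hqr with rfl | ⟨k, hk⟩
  · simpa using (hr.trans hqw).length_le
  · rwa [eq_of_concat_prefix hr (hq k r hk)]

lemma isChain_preimage {S : Set (List Bool)} (hv : IsDyadicEmbedding v)
    (hS : IsChain (· <+: ·) S) : IsChain (· <+: ·) (v ⁻¹' S) := by
  intro s hs t ht hst
  exact (hS hs ht (hv.injective.ne hst)).imp hv.prefix_apply_iff.1 hv.prefix_apply_iff.1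

lemma exists_image_branch_subset (hv : IsDyadicEmbedding v) (x : ℕ → Bool) :
    ∃ z, v '' branch x ⊆ branch z :=
  exists_branch_superset_of_isChain <|
    (isChain_branch x).image_of_map_rel _ _ v fun _ _ => hv.prefix_apply

lemma eq_of_image_branch_subset {x y z : ℕ → Bool} (hv : IsDyadicEmbedding v)
    (hx : v '' branch x ⊆ branch z) (hy : v '' branch y ⊆ branch z) : x = y := by
  obtain ⟨z', hz'⟩ := exists_branch_superset_of_isChain (hv.isChain_preimage (isChain_branch z))
  exact (eq_of_branch_subset ((image_subset_iff.1 hx).trans hz')).trans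
    (eq_of_branch_subset ((image_subset_iff.1 hy).trans hz')).symm

lemma finite_image_inter_branch {c : Set (List Bool)} (hv : IsDyadicEmbedding v)
    (hc : ∀ x, (c ∩ branch x).Finite) (z : ℕ → Bool) : (v '' c ∩ branch z).Finite := by
  obtain ⟨x, hx⟩ := exists_branch_superset_of_isChain (hv.isChain_preimage (isChain_branch z))
  rw [← image_inter_preimage]
  exact ((hc x).subset (inter_subset_inter_right c hx)).image v

end IsDyadicEmbedding

/-! ### Branching sets -/

/-- A nonempty set of nodes is branching if above each of its members it has two members that split:
these are the sets of nodes that contain a copy of the dyadic tree. -/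
def Branching (T : Set (List Bool)) : Prop :=
  T.Nonempty ∧ ∀ t ∈ T, ∃ w, t <+: w ∧ ∀ j, (T ∩ cone (w ++ [j])).Nonempty

lemma cone_subset_cone {s t : List Bool} (h : s <+: t) : cone t ⊆ cone s := fun _ => h.trans

lemma IsDyadicEmbedding.branching_range {v : List Bool → List Bool} (hv : IsDyadicEmbedding v) :
    Branching (range v) := by
  refine ⟨range_nonempty v, ?_⟩
  rintro _ ⟨s, rfl⟩
  obtain ⟨w, hw, hj⟩ := hv s
  exact ⟨w, hw, fun j => ⟨v (s ++ [j]), mem_range_self _, hj j⟩⟩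

lemma branching_univ : Branching univ :=
  ⟨univ_nonempty, fun t _ => ⟨t, List.prefix_rfl, fun j => ⟨t ++ [j], trivial, List.prefix_rfl⟩⟩⟩

namespace Branching

variable {T : Set (List Bool)}

lemma inter_cone (hT : Branching T) {w : List Bool} (hw : (T ∩ cone w).Nonempty) :
    Branching (T ∩ cone w) := by
  refine ⟨hw, fun t ht => ?_⟩
  obtain ⟨w', htw, hj⟩ := hT.2 t ht.1
  refine ⟨w', htw, fun j => (hj j).mono fun r hr => ⟨⟨hr.1, ?_⟩, hr.2⟩⟩
  exact ((ht.2.trans htw).trans (List.prefix_append w' [j])).trans hr.2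

lemma inter_cone_of_mem (hT : Branching T) {t : List Bool} (ht : t ∈ T) : Branching (T ∩ cone t) :=
  hT.inter_cone ⟨t, ht, List.prefix_rfl⟩

lemma exists_split (hT : Branching T) {t : List Bool} (ht : t ∈ T) :
    ∃ w, t <+: w ∧ ∀ j, Branching (T ∩ cone (w ++ [j])) :=
  (hT.2 t ht).imp fun _ h => ⟨h.1, fun j => hT.inter_cone (h.2 j)⟩

lemma exists_le_length (hT : Branching T) (n : ℕ) : ∃ t ∈ T, n ≤ t.length := by
  induction n with
  | zero => exact hT.1.imp fun t ht => ⟨ht, t.length.zero_le⟩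
  | succ n ih =>
    obtain ⟨t, ht, hn⟩ := ih
    obtain ⟨w, htw, hj⟩ := hT.2 t ht
    obtain ⟨r, hr, hwr⟩ := hj true
    refine ⟨r, hr, hn.trans_lt (htw.length_le.trans_lt ?_)⟩
    simpa using hwr.length_le

lemma exists_inter_cone_subset {X Y : Set (List Bool)} (hT : Branching T) (h : T ⊆ X ∪ Y)
    (hX : ¬ Branching (T ∩ X)) : ∃ t ∈ T, T ∩ cone t ⊆ Y := by
  by_contra! hY
  have hXt : ∀ t ∈ T, (T ∩ X ∩ cone t).Nonempty := fun t ht => by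
    obtain ⟨r, ⟨hr, htr⟩, hrY⟩ := not_subset.1 (hY t ht)
    exact ⟨r, ⟨hr, (h hr).resolve_right hrY⟩, htr⟩
  refine hX ⟨(hXt _ hT.1.some_mem).mono inter_subset_left, fun t ht => ?_⟩
  obtain ⟨w, htw, hw⟩ := hT.2 t ht.1
  refine ⟨w, htw, fun j => ?_⟩
  obtain ⟨r, hr, hwr⟩ := hw j
  exact (hXt r hr).mono (inter_subset_inter_right _ (cone_subset_cone hwr))

end Branching

/-- The ideal of the sets of nodes that contain no branching set. -/
def thinIdeal : Order.Ideal (Set (List Bool)) where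
  carrier := {X | ∀ T ⊆ X, ¬ Branching T}
  lower' := fun _ _ hYX hX T hT => hX T (hT.trans hYX)
  nonempty' := ⟨∅, fun _ hT h => h.1.not_subset_empty hT⟩
  directed' := by
    refine fun X hX Y hY => ⟨X ∪ Y, fun T hT h => ?_, subset_union_left, subset_union_right⟩
    obtain ⟨t, ht, htY⟩ := h.exists_inter_cone_subset hT (hX _ inter_subset_right)
    exact hY _ htY (h.inter_cone_of_mem ht)

lemma Branching.notMem_thinIdeal {T : Set (List Bool)} (hT : Branching T) : T ∉ thinIdeal :=
  fun h => h T Subset.rfl hT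

lemma Branching.exists_mem_forall {ι : Type*} [Finite ι] {T : Set (List Bool)} (hT : Branching T)
    {p : ι → List Bool → Prop} (hp : ∀ r, ∀ T' ⊆ T, Branching T' → ∃ t ∈ T', p r t) :
    ∃ t ∈ T, ∀ r, p r t := by
  by_contra! h
  have hthin : ⨆ r, {t ∈ T | ¬ p r t} ∈ thinIdeal :=
    Order.Ideal.iSup_mem_iff.2 fun r T' hT' hb => by
      obtain ⟨t, ht, hpt⟩ := hp r T' (hT'.trans (sep_subset _ _)) hb
      exact (hT' ht).2 hpt
  refine hT.notMem_thinIdeal (thinIdeal.lower (fun t ht => ?_) hthin)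
  obtain ⟨r, hr⟩ := h t ht
  exact mem_iUnion.2 ⟨r, ht, hr⟩

/-! ### Fusion -/

lemma exists_levelwise {X Y : Type*} (x₀ : X)
    (ρ : ∀ n, (List.Vector Bool n → X) → (List.Vector Bool n → Y) →
      (List.Vector Bool n → Bool → X) → Prop)
    (h : ∀ n P, ∃ y Q, ρ n P y Q) :
    ∃ (P : List Bool → X) (y : List Bool → Y), P [] = x₀ ∧
      ∀ n, ρ n (fun s => P s.1) (fun s => y s.1) (fun s j => P (s.1 ++ [j])) := by
  choose y Q hρ using h
  let p : ∀ n, List.Vector Bool n → X := fun n => n.rec (fun _ => x₀) fun n p t =>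
    Q n p ⟨t.1.dropLast, by simp [t.2]⟩ (t.1.getLast (by simp [← List.length_pos_iff, t.2]))
  have hp : ∀ n, (fun s : List.Vector Bool n => p s.1.length ⟨s.1, rfl⟩) = p n := by
    intro n
    funext ⟨s, hs⟩
    subst hs
    rfl
  refine ⟨fun s => p s.length ⟨s, rfl⟩, fun s => y s.length (p s.length) ⟨s, rfl⟩, rfl,
    fun n => ?_⟩
  convert hρ n (p n) using 1
  · exact hp n
  · funext ⟨s, hs⟩
    subst hs
    rfl
  · funext ⟨s, hs⟩ j
    subst hs
    have h := congrFun (hp (s.length + 1)) ⟨s ++ [j], by simp⟩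
    simpa [p] using h

/-- `t ∈ A`, and the two sets `Q j ⊆ A` lie in the two cones above some extension of `t`. -/
def SplitsAt (A : Set (List Bool)) (t : List Bool) (Q : Bool → Set (List Bool)) : Prop :=
  t ∈ A ∧ ∃ w, t <+: w ∧ ∀ j, Q j ⊆ A ∩ cone (w ++ [j])

/-- A fusion scheme: a tree of sets `P s` with nodes `v s ∈ P s` at which they split, so that the
nodes `v s` form a copy of the dyadic tree. -/
def IsFusion (P : List Bool → Set (List Bool)) (v : List Bool → List Bool) : Prop :=
  ∀ s, SplitsAt (P s) (v s) fun j => P (s ++ [j])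

namespace IsFusion

variable {P : List Bool → Set (List Bool)} {v : List Bool → List Bool} {s t w : List Bool}
  {i : Bool}

lemma subset (h : IsFusion P v) (hst : s <+: t) : P t ⊆ P s := by
  obtain ⟨r, rfl⟩ := hst
  induction r using List.reverseRecOn with
  | nil => simp
  | append_singleton r j ih =>
    obtain ⟨-, w, -, hw⟩ := h (s ++ r)
    rw [← List.append_assoc]
    exact ((hw j).trans inter_subset_left).trans ih

lemma apply_mem (h : IsFusion P v) (hst : s <+: t) : v t ∈ P s := h.subset hst (h t).1

lemma isDyadicEmbedding (h : IsFusion P v) : IsDyadicEmbedding v := fun s =>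
  (h s).2.imp fun _ hw => ⟨hw.1, fun j => (hw.2 j (h _).1).2⟩

lemma exists_split_index (h : IsFusion P v) (hs : w ++ [i] <+: v s) (ht : w ++ [!i] <+: v t) :
    ∃ q, (∀ j r, w ++ [j] <+: v r ↔ q ++ [j] <+: r) ∧ ∀ j, P (q ++ [j]) ⊆ cone (w ++ [j]) := by
  obtain ⟨q, hq⟩ := h.isDyadicEmbedding.exists_split_index hs ht
  obtain ⟨-, w', -, hw'⟩ := h q
  obtain rfl : w = w' := split_unique hs ht (hw' _ (h.apply_mem ((hq _ _).1 hs))).2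
    (hw' _ (h.apply_mem ((hq _ _).1 ht))).2
  exact ⟨q, hq, fun j => (hw' j).trans inter_subset_right⟩

end IsFusion

lemma Branching.exists_isFusion {T : Set (List Bool)} (hT : Branching T)
    (ρ : Set (List Bool) → Set (List Bool) → List Bool → (Bool → Set (List Bool)) → Prop)
    (hρ : ∀ (ι : Type) [Finite ι] (A : ι → Set (List Bool)), (∀ s, Branching (A s) ∧ A s ⊆ T) →
      ∃ (t : ι → List Bool) (Q : ι → Bool → Set (List Bool)),
        (∀ s, SplitsAt (A s) (t s) (Q s) ∧ ∀ j, Branching (Q s j)) ∧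
        ∀ s r, ρ (A s) (A r) (t s) (Q r)) :
    ∃ P v, IsFusion P v ∧ (∀ s, P s ⊆ T) ∧
      ∀ s r, s.length = r.length → ρ (P s) (P r) (v s) fun j => P (r ++ [j]) := by
  obtain ⟨P, v, -, hPv⟩ := exists_levelwise
    (⟨T, hT, Subset.rfl⟩ : {A : Set (List Bool) // Branching A ∧ A ⊆ T})
    (fun n A t Q => (∀ s, SplitsAt (A s).1 (t s) fun j => (Q s j).1) ∧
      ∀ s r, ρ (A s).1 (A r).1 (t s) fun j => (Q r j).1)
    fun n A => by
      obtain ⟨t, Q, hQ, hρ⟩ := hρ (List.Vector Bool n) (fun s => (A s).1) fun s => (A s).2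
      refine ⟨t, fun s j => ⟨Q s j, (hQ s).2 j, ?_⟩, fun s => (hQ s).1, hρ⟩
      exact ((hQ s).1.2.choose_spec.2 j).trans (inter_subset_left.trans (A s).2.2)
  exact ⟨fun s => (P s).1, v, fun s => (hPv s.length).1 ⟨s, rfl⟩, fun s => (P s).2.2,
    fun s r h => (hPv s.length).2 ⟨s, rfl⟩ ⟨r, h.symm⟩⟩

lemma Branching.exists_splitsAt {A B : Set (List Bool)} {t : List Bool} (hB : Branching B)
    (ht : t ∈ A) (hBA : B ⊆ A ∩ cone t) :
    ∃ Q, SplitsAt A t Q ∧ ∀ j, Branching (Q j) ∧ Q j ⊆ B := by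
  obtain ⟨b, hb⟩ := hB.1
  obtain ⟨w, hw, hj⟩ := hB.exists_split hb
  refine ⟨fun j => B ∩ cone (w ++ [j]), ⟨ht, w, (hBA hb).2.trans hw, fun j => ?_⟩,
    fun j => ⟨hj j, inter_subset_left⟩⟩
  exact inter_subset_inter_left _ (hBA.trans inter_subset_left)

lemma Branching.exists_isDyadicEmbedding {T : Set (List Bool)} (hT : Branching T) :
    ∃ v, IsDyadicEmbedding v ∧ range v ⊆ T := by
  obtain ⟨P, v, h, hP, -⟩ := hT.exists_isFusion (fun _ _ _ _ => True) fun ι _ A hA => by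
    choose t ht using fun s => (hA s).1.1
    choose Q hQ hQb using fun s => ((hA s).1.inter_cone_of_mem (ht s)).exists_splitsAt (ht s) .rfl
    exact ⟨t, Q, fun s => ⟨hQ s, fun j => (hQb s j).1⟩, fun _ _ => trivial⟩
  exact ⟨v, h.isDyadicEmbedding, range_subset_iff.2 fun s => hP s (h s).1⟩

/-! ### A dichotomy for ideals indexed by the nodes -/

/-- `A` and `B` lie in the two cones above a common node, `A` in the direction `i`. -/
def OppositeCones (i : Bool) (A B : Set (List Bool)) : Prop :=
  ∃ w, A ⊆ cone (w ++ [i]) ∧ B ⊆ cone (w ++ [!i])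

section Dichotomy

variable {T : Set (List Bool)} {i : Bool} {K : List Bool → Order.Ideal (Set (List Bool))}

lemma OppositeCones.mono {A A' B B' : Set (List Bool)} (h : OppositeCones i A B) (hA : A' ⊆ A)
    (hB : B' ⊆ B) : OppositeCones i A' B' :=
  h.imp fun _ hw => ⟨hA.trans hw.1, hB.trans hw.2⟩

lemma OppositeCones.disjoint {A B : Set (List Bool)} (h : OppositeCones i A B) : Disjoint A B := by
  obtain ⟨w, hA, hB⟩ := h
  exact Set.disjoint_left.2 fun t htA htB => by simpa using eq_of_concat_prefix (hA htA) (hB htB)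

lemma IsFusion.range_inter_cone_subset {P : List Bool → Set (List Bool)}
    {v : List Bool → List Bool} {s w : List Bool} (h : IsFusion P v) (hs : w ++ [i] <+: v s) :
    range v ∩ cone (w ++ [!i]) ⊆ v '' {r | r.length ≤ s.length} ∪
      ⋃ r ∈ {r | r.length = s.length ∧ OppositeCones i (P s) (P r)}, ⋃ j, P (r ++ [j]) := by
  rintro _ ⟨⟨r, rfl⟩, hr⟩
  obtain ⟨q, hq, hqP⟩ := h.exists_split_index hs hr
  have hqs := (hq _ _).1 hs
  have hqr := (hq _ _).1 hr
  rcases le_or_gt r.length s.length with hrs | hrs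
  · exact .inl ⟨r, hrs, rfl⟩
  · let r' := r.take s.length
    have hr' : r' <+: r := List.take_prefix _ _
    have hlen : r'.length = s.length := List.length_take_of_le hrs.le
    have hqr' : q ++ [!i] <+: r' :=
      List.prefix_of_prefix_length_le hqr hr' (by simpa [hlen] using hqs.length_le)
    obtain ⟨j, hj⟩ := (prefix_iff_eq_or_concat_prefix.1 hr').resolve_left
      fun h => hrs.ne (by rw [← hlen, h])
    exact .inr <| mem_biUnion (x := r')
      ⟨hlen, w, (h.subset hqs).trans (hqP i), (h.subset hqr').trans (hqP _)⟩
      (mem_iUnion.2 ⟨j, h.apply_mem hj⟩)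

lemma exists_refinement_mem_ideal {ι : Type*} [Finite ι] {A : ι → Set (List Bool)}
    (hgood : ∀ B ⊆ T, ∀ C ⊆ T, Branching B → Branching C → OppositeCones i B C →
      ∃ t ∈ B, ∃ C' ⊆ C, Branching C' ∧ C' ∈ K t)
    (hA : ∀ s, Branching (A s) ∧ A s ⊆ T) (s : ι) :
    ∃ t ∈ A s, ∃ C : ι → Set (List Bool), C s ⊆ cone t ∧
      ∀ r, C r ⊆ A r ∧ Branching (C r) ∧ (OppositeCones i (A s) (A r) → C r ∈ K t) := by
  obtain ⟨t, ht, hgood⟩ : ∃ t ∈ A s, ∀ r, OppositeCones i (A s) (A r) →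
      ∃ C ⊆ A r, Branching C ∧ C ∈ K t :=
    (hA s).1.exists_mem_forall fun r T' hT' hT'b => by
      by_cases hr : OppositeCones i (A s) (A r)
      · obtain ⟨t, ht, h⟩ := hgood T' (hT'.trans (hA s).2) (A r) (hA r).2 hT'b (hA r).1
          (hr.mono hT' .rfl)
        exact ⟨t, ht, fun _ => h⟩
      · exact hT'b.1.imp fun t ht => ⟨ht, fun h => absurd h hr⟩
  have hC : ∀ r, ∃ C ⊆ A r, Branching C ∧ (r = s → C ⊆ cone t) ∧
      (OppositeCones i (A s) (A r) → C ∈ K t) := fun r => by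
    by_cases hr : OppositeCones i (A s) (A r)
    · obtain ⟨C, hCA, hC, hCK⟩ := hgood r hr
      refine ⟨C, hCA, hC, ?_, fun _ => hCK⟩
      rintro rfl
      exact absurd (disjoint_self.1 hr.disjoint) (hA r).1.1.ne_empty
    · rcases eq_or_ne r s with rfl | hrs
      · exact ⟨A r ∩ cone t, inter_subset_left, (hA r).1.inter_cone_of_mem ht,
          fun _ => inter_subset_right, fun h => absurd h hr⟩
      · exact ⟨A r, .rfl, (hA r).1, fun h => absurd h hrs, fun h => absurd h hr⟩
  choose C hCA hC hCs hCK using hC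
  exact ⟨t, ht, C, hCs s rfl, fun r => ⟨hCA r, hC r, hCK r⟩⟩

lemma exists_step_mem_ideal {ι : Type*} [Finite ι] {A : ι → Set (List Bool)}
    (hgood : ∀ B ⊆ T, ∀ C ⊆ T, Branching B → Branching C → OppositeCones i B C →
      ∃ t ∈ B, ∃ C' ⊆ C, Branching C' ∧ C' ∈ K t)
    (hA : ∀ s, Branching (A s) ∧ A s ⊆ T) :
    ∃ (t : ι → List Bool) (B : ι → Set (List Bool)),
      (∀ s, t s ∈ A s ∧ B s ⊆ A s ∩ cone (t s) ∧ Branching (B s)) ∧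
        ∀ s r, OppositeCones i (A s) (A r) → B r ∈ K (t s) := by
  classical
  have := Fintype.ofFinite ι
  suffices h : ∀ S : Finset ι, ∃ (t : ι → List Bool) (B : ι → Set (List Bool)),
      (∀ s, B s ⊆ A s ∧ Branching (B s)) ∧ ∀ s ∈ S, t s ∈ A s ∧ B s ⊆ cone (t s) ∧
        ∀ r, OppositeCones i (A s) (A r) → B r ∈ K (t s) by
    obtain ⟨t, B, hB, ht⟩ := h Finset.univ
    simp only [Finset.mem_univ, true_imp_iff] at ht
    exact ⟨t, B, fun s => ⟨(ht s).1, subset_inter (hB s).1 (ht s).2.1, (hB s).2⟩,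
      fun s => (ht s).2.2⟩
  intro S
  induction S using Finset.induction with
  | empty => exact ⟨fun _ => [], A, fun s => ⟨.rfl, (hA s).1⟩, by simp⟩
  | insert s S hs ih =>
    obtain ⟨t, B, hB, ht⟩ := ih
    obtain ⟨t₀, ht₀, C, hCs, hC⟩ := exists_refinement_mem_ideal hgood
      (fun r => ⟨(hB r).2, (hB r).1.trans (hA r).2⟩) s
    refine ⟨Function.update t s t₀, C, fun r => ⟨(hC r).1.trans (hB r).1, (hC r).2.1⟩,
      fun r hr => ?_⟩
    rcases eq_or_ne r s with rfl | hrs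
    · simp only [Function.update_self]
      exact ⟨(hB r).1 ht₀, hCs, fun q hq => (hC q).2.2 (hq.mono (hB r).1 (hB q).1)⟩
    · obtain ⟨htr, hBr, hBK⟩ := ht r ((Finset.mem_insert.1 hr).resolve_left hrs)
      simp only [Function.update_of_ne hrs]
      exact ⟨htr, (hC r).1.trans hBr, fun q hq => (K _).lower (hC q).1 (hBK q hq)⟩

lemma Branching.exists_forall_mem_ideal (hT : Branching T)
    (hK : ∀ t X, X.Finite → X ∈ K t)
    (hgood : ∀ B ⊆ T, ∀ C ⊆ T, Branching B → Branching C → OppositeCones i B C →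
      ∃ t ∈ B, ∃ C' ⊆ C, Branching C' ∧ C' ∈ K t) :
    ∃ T' ⊆ T, Branching T' ∧ ∀ t ∈ T', ∀ B ⊆ T', OppositeCones i {t} B → B ∈ K t := by
  obtain ⟨P, v, h, hPT, hP⟩ := hT.exists_isFusion
    (fun A B t Q => OppositeCones i A B → ∀ j, Q j ∈ K t) fun ι _ A hA => by
      obtain ⟨t, B, htB, hB⟩ := exists_step_mem_ideal hgood hA
      choose Q hQ hQB using fun s => (htB s).2.2.exists_splitsAt (htB s).1 (htB s).2.1
      exact ⟨t, Q, fun s => ⟨hQ s, fun j => (hQB s j).1⟩,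
        fun s r hsr j => (K _).lower (hQB r j).2 (hB s r hsr)⟩
  refine ⟨range v, range_subset_iff.2 fun s => hPT s (h s).1, h.isDyadicEmbedding.branching_range,
    ?_⟩
  rintro _ ⟨s, rfl⟩ B hB ⟨w, hws, hwB⟩
  have hfin : {r : List Bool | r.length ≤ s.length}.Finite := List.finite_length_le Bool _
  have hcover := (subset_inter hB hwB).trans (h.range_inter_cone_subset (hws rfl))
  refine (K (v s)).lower hcover (Order.Ideal.sup_mem (hK _ _ (hfin.image v)) ?_)
  exact (Order.Ideal.biSup_mem_iff (hfin.subset fun _ hr => hr.1.le)).2 fun r hr =>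
    Order.Ideal.iSup_mem_iff.2 (hP s r hr.1.symm hr.2)

lemma Branching.exists_forall_notMem_ideal (hT : Branching T)
    (hbad : ∀ A ⊆ T, Branching A → ∃ B ⊆ A, ∃ C ⊆ A, Branching B ∧ Branching C ∧
      OppositeCones i B C ∧ ∀ t ∈ B, ∀ C' ⊆ C, Branching C' → C' ∉ K t) :
    ∃ T' ⊆ T, Branching T' ∧
      ∀ t ∈ T', ∀ B ⊆ T', Branching B → OppositeCones i {t} B → B ∉ K t := by
  obtain ⟨P, v, h, hPT, hP⟩ := hT.exists_isFusion
    (fun _ _ _ Q => ∀ t ∈ Q i, ∀ B ⊆ Q (!i), Branching B → B ∉ K t) fun ι _ A hA => by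
      choose t ht using fun s => (hA s).1.1
      choose B hB C hC hBb hCb hBC hK using fun s => hbad (A s ∩ cone (t s))
        (inter_subset_left.trans (hA s).2) ((hA s).1.inter_cone_of_mem (ht s))
      refine ⟨t, fun s j => if j = i then B s else C s,
        fun s => ⟨⟨ht s, ?_⟩, fun j => ?_⟩, fun _ r => by simpa using hK r⟩
      · obtain ⟨w, hBw, hCw⟩ := hBC s
        obtain ⟨b, hb⟩ := (hBb s).1
        obtain ⟨c, hc⟩ := (hCb s).1
        refine ⟨w, prefix_of_split (hB s hb).2 (hC s hc).2 (hBw hb) (hCw hc), fun j => ?_⟩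
        rcases Bool.eq_or_eq_not j i with rfl | rfl
        · simpa using ⟨(hB s).trans inter_subset_left, hBw⟩
        · simpa using ⟨(hC s).trans inter_subset_left, hCw⟩
      · dsimp only
        split_ifs
        exacts [hBb s, hCb s]
  refine ⟨range v, range_subset_iff.2 fun s => hPT s (h s).1, h.isDyadicEmbedding.branching_range,
    ?_⟩
  rintro _ ⟨s, rfl⟩ B hB hBb ⟨w, hws, hwB⟩
  have hws : w ++ [i] <+: v s := hws rfl
  obtain ⟨_, hb⟩ := hBb.1
  obtain ⟨r, rfl⟩ := hB hb
  obtain ⟨q, hq, -⟩ := h.exists_split_index hws (hwB hb)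
  refine hP q q rfl (v s) (h.apply_mem ((hq _ _).1 hws)) B (fun b hb => ?_) hBb
  obtain ⟨r, rfl⟩ := hB hb
  exact h.apply_mem ((hq _ _).1 (hwB hb))

theorem Branching.exists_forall_mem_or_forall_notMem (hT : Branching T) (i : Bool)
    (hK : ∀ t X, X.Finite → X ∈ K t) :
    ∃ T' ⊆ T, Branching T' ∧ ((∀ t ∈ T', ∀ B ⊆ T', OppositeCones i {t} B → B ∈ K t) ∨
      ∀ t ∈ T', ∀ B ⊆ T', Branching B → OppositeCones i {t} B → B ∉ K t) := by
  by_cases hgood : ∃ A ⊆ T, Branching A ∧ ∀ B ⊆ A, ∀ C ⊆ A, Branching B → Branching C →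
      OppositeCones i B C → ∃ t ∈ B, ∃ C' ⊆ C, Branching C' ∧ C' ∈ K t
  · obtain ⟨A, hAT, hA, hgood⟩ := hgood
    obtain ⟨T', hT', h, hK⟩ := hA.exists_forall_mem_ideal hK hgood
    exact ⟨T', hT'.trans hAT, h, .inl hK⟩
  · push Not at hgood
    obtain ⟨T', hT', h, hK⟩ := hT.exists_forall_notMem_ideal hgood
    exact ⟨T', hT', h, .inr hK⟩

end Dichotomy

/-! ### Tame sets -/

/-- `Y` is `i`-tame if along each `x ∈ 2^ω` only finitely many of the nodes at which `x` turns to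
`!i` have a member of `Y` above their `i`-child. -/
def Tame (i : Bool) (Y : Set (List Bool)) : Prop :=
  ∀ x : ℕ → Bool, {n | x n = !i ∧ ∃ t ∈ Y, initSeg x n ++ [i] <+: t}.Finite

section Tame

variable {i : Bool} {X Y : Set (List Bool)}

lemma Tame.mono (hY : Tame i Y) (h : X ⊆ Y) : Tame i X := fun x =>
  (hY x).subset fun _ hn => ⟨hn.1, hn.2.imp fun _ ht => ⟨h ht.1, ht.2⟩⟩

lemma Tame.union (hX : Tame i X) (hY : Tame i Y) : Tame i (X ∪ Y) := fun x =>
  ((hX x).union (hY x)).subset fun _ ⟨hn, t, ht, h⟩ =>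
    ht.imp (fun ht => ⟨hn, t, ht, h⟩) fun ht => ⟨hn, t, ht, h⟩

lemma tame_of_finite (hY : Y.Finite) : Tame i Y := fun x =>
  (hY.biUnion fun t _ => finite_lt_nat t.length).subset fun n ⟨_, t, ht, h⟩ =>
    mem_biUnion ht (by simpa using h.length_le)

lemma tame_of_forall_oppositeCones
    (h : ∀ t ∈ Y, ∀ B ⊆ Y, OppositeCones i {t} B → Tame i B) : Tame i Y := fun x => by
  rcases eq_empty_or_nonempty {n | x n = !i ∧ ∃ t ∈ Y, initSeg x n ++ [i] <+: t} with h0 | ⟨n, hn⟩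
  · exact h0 ▸ finite_empty
  obtain ⟨hxn, t, ht, hnt⟩ := hn
  have hB : Tame i (Y ∩ cone (initSeg x n ++ [!i])) :=
    h t ht _ inter_subset_left ⟨_, singleton_subset_iff.2 hnt, inter_subset_right⟩
  refine ((finite_le_nat n).union (hB x)).subset fun m ⟨hxm, r, hr, hmr⟩ => ?_
  refine (le_or_gt m n).imp id fun hnm => ⟨hxm, r, ⟨hr, ?_⟩, hmr⟩
  rw [← hxn, ← initSeg_succ]
  exact (initSeg_prefix_initSeg x hnm).trans ((List.prefix_append _ _).trans hmr)

lemma tame_of_isChain (hY : IsChain (· <+: ·) Y) : Tame i Y :=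
  tame_of_forall_oppositeCones fun t ht B hB ⟨w, htw, hBw⟩ => by
    suffices hempty : B = ∅ from hempty ▸ tame_of_finite finite_empty
    refine eq_empty_of_forall_notMem fun b hb => ?_
    rcases hY.total ht (hB hb) with h | h
    · simpa using eq_of_concat_prefix ((htw rfl).trans h) (hBw hb)
    · simpa using eq_of_concat_prefix (htw rfl) ((hBw hb).trans h)

lemma exists_forall_infinite_inter_cone (hY : Y.Infinite) :
    ∃ x, ∀ n, (Y ∩ cone (initSeg x n)).Infinite := by
  refine exists_forall_initSeg (q := fun w => (Y ∩ cone w).Infinite) (hY.mono fun t ht => ?_)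
    fun w hw => ?_
  · exact ⟨ht, List.nil_prefix⟩
  · by_contra! hfin
    refine hw (((finite_singleton w).union (finite_iUnion hfin)).subset fun t ht => ?_)
    rcases prefix_iff_eq_or_concat_prefix.1 ht.2 with rfl | ⟨j, hj⟩
    · exact .inl rfl
    · exact .inr (mem_iUnion.2 ⟨j, ht.1, hj⟩)

lemma finite_of_forall_tame (hY : ∀ i, Tame i Y) (hb : ∀ x, (Y ∩ branch x).Finite) :
    Y.Finite := by
  by_contra hinf
  obtain ⟨x, hx⟩ := exists_forall_infinite_inter_cone hinf
  obtain ⟨n, hn⟩ := (finite_iUnion fun i => hY i x).bddAbove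
  obtain ⟨t, ⟨htY, hnt⟩, htx⟩ := ((hx (n + 1)).sdiff (hb x)).nonempty
  obtain ⟨m, hnm, hm⟩ := exists_concat_not_prefix hnt fun h => htx ⟨htY, h⟩
  have hmn : m ≤ n := hn (mem_iUnion.2 ⟨!x m, by simp, t, htY, hm⟩)
  lia

lemma Branching.exists_infinite_inter_branch {T : Set (List Bool)} (hT : Branching T) :
    ∃ x, (T ∩ branch x).Infinite := by
  obtain ⟨v, hv, hvT⟩ := hT.exists_isDyadicEmbedding
  have hinf : (branch fun _ => true).Infinite :=
    infinite_range_of_injective fun m n h => by simpa using congrArg List.length h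
  obtain ⟨x, hx⟩ := hv.exists_image_branch_subset _
  exact ⟨x, (hinf.image hv.injective.injOn).mono
    (subset_inter ((image_subset_range _ _).trans hvT) hx)⟩

end Tame

/-! ### Making all traces tame -/

section Traces

variable {Z : Type*} {i : Bool} {f : Z → Set (List Bool)} {V V' : Set Z} {T : Set (List Bool)}

/-- The ideal of the sets of nodes on which all the sets `f z` with `z ∈ V` have tame traces. -/
def tameIdeal (i : Bool) (f : Z → Set (List Bool)) (V : Set Z) :
    Order.Ideal (Set (List Bool)) where
  carrier := {X | ∀ z ∈ V, Tame i (f z ∩ X)}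
  lower' := fun _ _ hYX hX z hz => (hX z hz).mono (inter_subset_inter_right _ hYX)
  nonempty' := ⟨∅, fun _ _ => tame_of_finite (by simp)⟩
  directed' := fun X hX Y hY => by
    refine ⟨X ∪ Y, fun z hz => ?_, subset_union_left, subset_union_right⟩
    rw [inter_union_distrib_left]
    exact (hX z hz).union (hY z hz)

lemma mem_tameIdeal {X : Set (List Bool)} :
    X ∈ tameIdeal i f V ↔ ∀ z ∈ V, Tame i (f z ∩ X) := Iff.rfl

/-- No branching subset of `T` makes the traces of all the sets `f z` with `z ∈ V` tame. -/
def NowhereTame (i : Bool) (f : Z → Set (List Bool)) (V : Set Z) (T : Set (List Bool)) : Prop :=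
  ∀ P ⊆ T, Branching P → P ∉ tameIdeal i f V

lemma NowhereTame.mono {T' : Set (List Bool)} (h : NowhereTame i f V T) (hT : T' ⊆ T) :
    NowhereTame i f V T' := fun P hP => h P (hP.trans hT)

lemma NowhereTame.nonempty (hT : Branching T) (h : NowhereTame i f V T) : V.Nonempty := by
  by_contra! hV
  exact h T .rfl hT (by simp [mem_tameIdeal, hV])

lemma Branching.exists_oppositeCones (hT : Branching T) (i : Bool) :
    ∃ A ⊆ T, ∃ B ⊆ T, Branching A ∧ Branching B ∧ OppositeCones i A B := by
  obtain ⟨t, ht⟩ := hT.1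
  obtain ⟨w, -, hw⟩ := hT.exists_split ht
  exact ⟨_, inter_subset_left, _, inter_subset_left, hw i, hw !i, w, inter_subset_right,
    inter_subset_right⟩

lemma Branching.exists_forall_tame_or_forall_nowhereTame (hT : Branching T) (i : Bool)
    (f : Z → Set (List Bool)) (W : List Bool → Set Z) :
    ∃ T' ⊆ T, Branching T' ∧
      ((∀ t ∈ T', ∀ B ⊆ T', OppositeCones i {t} B → ∀ z ∈ W t, Tame i (f z ∩ B)) ∨
        ∀ t ∈ T', ∀ B ⊆ T', OppositeCones i {t} B → NowhereTame i f (W t) B) := by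
  obtain ⟨T', hT'T, hT', h⟩ := hT.exists_forall_mem_or_forall_notMem i
    (K := fun t => tameIdeal i f (W t))
    fun _ _ hX _ _ => tame_of_finite (hX.subset inter_subset_right)
  refine ⟨T', hT'T, hT', h.imp id fun h t ht B hB htB P hPB hP => ?_⟩
  exact h t ht P (hPB.trans hB) hP (htB.mono .rfl hPB)

lemma NowhereTame.exists_forall_mem (hT : Branching T) (h : NowhereTame i f V T) :
    ∃ T' ⊆ T, Branching T' ∧ ∀ t ∈ T', ∀ B ⊆ T', OppositeCones i {t} B →
      NowhereTame i f (V ∩ {z | t ∈ f z}) B := by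
  obtain ⟨T', hT'T, hT', ht | ht⟩ := hT.exists_forall_tame_or_forall_nowhereTame i f
    fun t => V ∩ {z | t ∈ f z}
  · refine absurd (fun z hz => ?_) (h T' hT'T hT')
    refine tame_of_forall_oppositeCones fun t ht' B hB htB => ?_
    exact (ht t ht'.2 B (hB.trans inter_subset_right) htB z ⟨hz, ht'.1⟩).mono
      (subset_inter (hB.trans inter_subset_left) .rfl)
  · exact ⟨T', hT'T, hT', ht⟩

lemma NowhereTame.exists_common (hT : Branching T) (h : NowhereTame i f V T)
    (h' : NowhereTame i f V' T) (n : ℕ) :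
    ∃ t, n ≤ t.length ∧ ∃ T' ⊆ T, Branching T' ∧ NowhereTame i f (V ∩ {z | t ∈ f z}) T' ∧
      NowhereTame i f (V' ∩ {z | t ∈ f z}) T' := by
  obtain ⟨T₁, hT₁T, hT₁, h₁⟩ := h.exists_forall_mem hT
  obtain ⟨T₂, hT₂T₁, hT₂, h₂⟩ := (h'.mono hT₁T).exists_forall_mem hT₁
  obtain ⟨A, hA, B, hB, hAb, hBb, hAB⟩ := hT₂.exists_oppositeCones i
  obtain ⟨t, ht, hnt⟩ := hAb.exists_le_length n
  have htB : OppositeCones i {t} B := hAB.mono (singleton_subset_iff.2 ht) .rfl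
  exact ⟨t, hnt, B, hB.trans (hT₂T₁.trans hT₁T), hBb,
    h₁ t (hT₂T₁ (hA ht)) B (hB.trans hT₂T₁) htB, h₂ t (hA ht) B hB htB⟩

lemma NowhereTame.exists_split (hchain : ∀ z x, (f z ∩ branch x).Infinite → f z = branch x)
    (hT : Branching T) (h : NowhereTame i f V T) :
    ∃ t, ∃ T' ⊆ T, Branching T' ∧ NowhereTame i f (V ∩ {z | t ∈ f z}) T' ∧
      NowhereTame i f (V ∩ {z | t ∉ f z}) T' := by
  obtain ⟨T₁, hT₁T, hT₁, h₁⟩ := h.exists_forall_mem hT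
  obtain ⟨T₂, hT₂T₁, hT₂, h₂⟩ := hT₁.exists_forall_tame_or_forall_nowhereTame i f
    fun t => V ∩ {z | t ∉ f z}
  obtain ⟨A, hA, B, hB, hAb, hBb, hAB⟩ := hT₂.exists_oppositeCones i
  have htB : ∀ t ∈ A, OppositeCones i {t} B := fun t ht =>
    hAB.mono (singleton_subset_iff.2 ht) .rfl
  have hBT : B ⊆ T := hB.trans (hT₂T₁.trans hT₁T)
  rcases h₂ with h₂ | h₂
  · obtain ⟨z, hz, hzB⟩ : ∃ z ∈ V, ¬ Tame i (f z ∩ B) := by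
      simpa [mem_tameIdeal] using h B hBT hBb
    have hAz : A ⊆ f z := fun t ht => by
      by_contra htz
      exact hzB (h₂ t (hA ht) B hB (htB t ht) z ⟨hz, htz⟩)
    obtain ⟨x, hx⟩ := hAb.exists_infinite_inter_branch
    have hzx := hchain z x (hx.mono (inter_subset_inter_left _ hAz))
    exact absurd (tame_of_isChain ((hzx ▸ isChain_branch x).mono inter_subset_left)) hzB
  · obtain ⟨t, ht⟩ := hAb.1
    exact ⟨t, B, hBT, hBb, h₁ t (hT₂T₁ (hA ht)) B (hB.trans hT₂T₁) (htB t ht),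
      h₂ t (hA ht) B hB (htB t ht)⟩

lemma NowhereTame.exists_fiber_of_forall_le {e : Z → ℕ} {m : ℕ} (hT : Branching T)
    (h : NowhereTame i f V T) (he : ∀ z ∈ V, e z ≤ m) :
    ∃ k, ∃ T' ⊆ T, Branching T' ∧ NowhereTame i f (V ∩ {z | e z = k}) T' := by
  by_contra! hcon
  have hP : ∀ k, ∃ P ⊆ T, Branching P ∧ P ∈ tameIdeal i f (V ∩ {z | e z < k}) := fun k => by
    induction k with
    | zero => exact ⟨T, .rfl, hT, fun z hz => absurd hz.2 (Nat.not_lt_zero _)⟩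
    | succ k ih =>
      obtain ⟨P, hPT, hP, hPk⟩ := ih
      obtain ⟨Q, hQP, hQ, hQk⟩ : ∃ Q ⊆ P, Branching Q ∧ Q ∈ tameIdeal i f (V ∩ {z | e z = k}) := by
        simpa [NowhereTame] using hcon k P hPT hP
      refine ⟨Q, hQP.trans hPT, hQ, fun z hz => ?_⟩
      rcases (Nat.lt_succ_iff_lt_or_eq.1 hz.2) with hzk | hzk
      · exact (hPk z ⟨hz.1, hzk⟩).mono (inter_subset_inter_right _ hQP)
      · exact hQk z ⟨hz.1, hzk⟩
  obtain ⟨P, hPT, hP, hPm⟩ := hP (m + 1)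
  exact h P hPT hP fun z hz => hPm z ⟨hz, Nat.lt_succ_of_le (he z hz)⟩

lemma NowhereTame.exists_fiber (e : Z → ℕ) (hT : Branching T) (h : NowhereTame i f V T) :
    ∃ k, ∃ T' ⊆ T, Branching T' ∧ NowhereTame i f (V ∩ {z | e z = k}) T' := by
  obtain ⟨T₁, hT₁T, hT₁, h₁ | h₁⟩ := hT.exists_forall_tame_or_forall_nowhereTame i f
    fun t => V ∩ {z | e z ≤ t.length}
  · refine absurd (fun z hz => ?_) (h T₁ hT₁T hT₁)
    have hlong : Tame i (f z ∩ T₁ ∩ {t | e z ≤ t.length}) :=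
      tame_of_forall_oppositeCones fun t ht B hB htB =>
        (h₁ t ht.1.2 B (fun b hb => (hB hb).1.2) htB z ⟨hz, ht.2⟩).mono
          fun b hb => ⟨(hB hb).1.1, hb⟩
    have hshort : Tame i {t : List Bool | t.length ≤ e z} :=
      tame_of_finite (List.finite_length_le Bool _)
    exact (hlong.union hshort).mono fun t ht =>
      (le_total (e z) t.length).imp (fun h => ⟨ht, h⟩) id
  · obtain ⟨A, hA, B, hB, hAb, hBb, hAB⟩ := hT₁.exists_oppositeCones i
    obtain ⟨t, ht⟩ := hAb.1
    obtain ⟨k, T', hT'B, hT', hk⟩ := (h₁ t (hA ht) B hB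
      (hAB.mono (singleton_subset_iff.2 ht) .rfl)).exists_fiber_of_forall_le hBb fun _ hz => hz.2
    refine ⟨k, T', hT'B.trans (hB.trans hT₁T), hT', fun P hP hPb hPk => hk P hP hPb ?_⟩
    exact fun z hz => hPk z ⟨hz.1.1, hz.2⟩

end Traces

/-! ### Families parametrized by the Baire space -/

lemma exists_forall_mem_closure {E : ℕ → Type*} [∀ n, TopologicalSpace (E n)]
    {V : ℕ → Set (∀ n, E n)} (hV : Antitone V) (hne : ∀ n, (V n).Nonempty)
    (hcyl : ∀ n, ∀ z ∈ V n, V n ⊆ PiNat.cylinder z n) : ∃ z, ∀ n, z ∈ closure (V n) := by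
  choose a ha using hne
  refine ⟨fun k => a (k + 1) k, fun n => mem_closure_of_tendsto (f := a) (b := Filter.atTop) ?_ <|
    (Filter.eventually_ge_atTop n).mono fun m hm => hV hm (ha m)⟩
  refine tendsto_pi_nhds.2 fun k => tendsto_const_nhds.congr' <|
    (Filter.eventually_gt_atTop k).mono fun m hm => ?_
  exact (hcyl (k + 1) _ (ha _) (hV hm (ha m)) k k.lt_succ_self).symm

section Baire

variable {i : Bool} {f : (ℕ → ℕ) → Set (List Bool)} {V V' : Set (ℕ → ℕ)} {T : Set (List Bool)}

lemma NowhereTame.exists_subset_cylinder (hT : Branching T) (h : NowhereTame i f V T) (n : ℕ) :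
    ∃ V' ⊆ V, (∀ z ∈ V', V' ⊆ PiNat.cylinder z n) ∧
      ∃ T' ⊆ T, Branching T' ∧ NowhereTame i f V' T' := by
  obtain ⟨k, T', hT'T, hT', hk⟩ := h.exists_fiber (fun z => Encodable.encode (PiNat.res z n)) hT
  refine ⟨_, inter_subset_left, fun z hz z' hz' => ?_, T', hT'T, hT', hk⟩
  rw [PiNat.cylinder_eq_res]
  exact Encodable.encode_injective (hz'.2.trans hz.2.symm)

lemma NowhereTame.exists_mem_closure_infinite_inter (hf : ∀ t, IsClopen {z | t ∈ f z})
    (hT : Branching T) (h : NowhereTame i f V T) (h' : NowhereTame i f V' T) :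
    ∃ z ∈ closure V, ∃ z' ∈ closure V', (f z ∩ f z').Infinite := by
  let S := {p : Set (ℕ → ℕ) × Set (ℕ → ℕ) // ∃ T, Branching T ∧ NowhereTame i f p.1 T ∧
    NowhereTame i f p.2 T}
  have step : ∀ (n : ℕ) (p : S), ∃ (q : S) (t : List Bool), n ≤ t.length ∧
      (q.1.1 ⊆ p.1.1 ∩ {z | t ∈ f z} ∧ ∀ z ∈ q.1.1, q.1.1 ⊆ PiNat.cylinder z (n + 1)) ∧
      q.1.2 ⊆ p.1.2 ∩ {z | t ∈ f z} ∧ ∀ z ∈ q.1.2, q.1.2 ⊆ PiNat.cylinder z (n + 1) := by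
    rintro n ⟨⟨V, V'⟩, T, hT, hV, hV'⟩
    obtain ⟨t, htn, T₁, -, hT₁, h₁, h₁'⟩ := hV.exists_common hT hV' n
    obtain ⟨W, hW, hWn, T₂, hT₂T₁, hT₂, h₂⟩ := h₁.exists_subset_cylinder hT₁ (n + 1)
    obtain ⟨W', hW', hWn', T₃, hT₃T₂, hT₃, h₃⟩ :=
      (h₁'.mono hT₂T₁).exists_subset_cylinder hT₂ (n + 1)
    exact ⟨⟨(W, W'), T₃, hT₃, h₂.mono hT₃T₂, h₃⟩, t, htn, ⟨hW, hWn⟩, hW', hWn'⟩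
  choose q t htn hq hq' using step
  let p : ℕ → S := fun n => n.rec ⟨(V, V'), T, hT, h, h'⟩ q
  obtain ⟨z, hz⟩ := exists_forall_mem_closure (V := fun n => (p n).1.1)
    (antitone_nat_of_succ_le fun n => (hq n (p n)).1.trans inter_subset_left)
    (fun n => (p n).2.choose_spec.2.1.nonempty (p n).2.choose_spec.1)
    (Nat.rec (by simp) fun n _ => (hq n (p n)).2)
  obtain ⟨z', hz'⟩ := exists_forall_mem_closure (V := fun n => (p n).1.2)
    (antitone_nat_of_succ_le fun n => (hq' n (p n)).1.trans inter_subset_left)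
    (fun n => (p n).2.choose_spec.2.2.nonempty (p n).2.choose_spec.1)
    (Nat.rec (by simp) fun n _ => (hq' n (p n)).2)
  refine ⟨z, hz 0, z', hz' 0, Infinite.mono (s := range fun n => t n (p n)) ?_ fun hfin => ?_⟩
  · rintro _ ⟨n, rfl⟩
    exact ⟨closure_minimal ((hq n (p n)).1.trans inter_subset_right) (hf _).1 (hz (n + 1)),
      closure_minimal ((hq' n (p n)).1.trans inter_subset_right) (hf _).1 (hz' (n + 1))⟩
  · obtain ⟨m, hm⟩ := (hfin.image List.length).bddAbove
    exact (Nat.lt_of_succ_le (htn (m + 1) (p (m + 1)))).not_ge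
      (hm (mem_image_of_mem _ (mem_range_self (m + 1))))

theorem Branching.exists_forall_tame (hT : Branching T) (i : Bool)
    (hf : ∀ t, IsClopen {z | t ∈ f z}) (had : ∀ z z', f z ≠ f z' → (f z ∩ f z').Finite)
    (hchain : ∀ z x, (f z ∩ branch x).Infinite → f z = branch x) :
    ∃ T' ⊆ T, Branching T' ∧ ∀ z, Tame i (f z ∩ T') := by
  by_contra! hcon
  have h : NowhereTame i f univ T := fun P hP hPb hPt =>
    (hcon P hP hPb).elim fun z hz => hz (hPt z trivial)
  obtain ⟨t, T', -, hT', ht, ht'⟩ := h.exists_split hchain hT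
  obtain ⟨z, hz, z', hz', hinf⟩ := ht.exists_mem_closure_infinite_inter hf hT' ht'
  have htz : t ∈ f z := closure_minimal inter_subset_right (hf t).1 hz
  have htz' : t ∉ f z' := closure_minimal inter_subset_right (hf t).compl.1 hz'
  exact hinf (had z z' fun he => htz' (he ▸ htz))

lemma exists_isDyadicEmbedding_forall_tame (hf : ∀ t, IsClopen {z | t ∈ f z})
    (had : ∀ z z', f z ≠ f z' → (f z ∩ f z').Finite)
    (hchain : ∀ z x, (f z ∩ branch x).Infinite → f z = branch x) :
    ∃ v, IsDyadicEmbedding v ∧ ∀ i z, Tame i (f z ∩ range v) := by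
  obtain ⟨T₀, -, hT₀, h₀⟩ := branching_univ.exists_forall_tame false hf had hchain
  obtain ⟨T₁, hT₁T₀, hT₁, h₁⟩ := hT₀.exists_forall_tame true hf had hchain
  obtain ⟨v, hv, hvT₁⟩ := hT₁.exists_isDyadicEmbedding
  refine ⟨v, hv, Bool.forall_bool.2 ⟨fun z => ?_, fun z => ?_⟩⟩
  · exact (h₀ z).mono (inter_subset_inter_right _ (hvT₁.trans hT₁T₀))
  · exact (h₁ z).mono (inter_subset_inter_right _ hvT₁)

end Baire

/-! ### A perfect subfamily -/

lemma countable_image_setOf_exists_nhds_countable {X Y : Type*} [TopologicalSpace X]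
    [SecondCountableTopology X] (g : X → Y) :
    (g '' {x | ∃ U ∈ nhds x, (g '' U).Countable}).Countable := by
  choose! U hU hgU using fun (x : X) (hx : ∃ U ∈ nhds x, (g '' U).Countable) => hx
  obtain ⟨t, hts, ht, hcover⟩ :=
    TopologicalSpace.countable_cover_nhdsWithin fun x hx => mem_nhdsWithin_of_mem_nhds (hU x hx)
  refine (ht.biUnion fun x hx => hgU x (hts hx)).mono ?_
  rw [← image_iUnion₂]
  exact image_mono hcover

lemma exists_injective_forall_mem_of_infinite {ι α : Type*} [Finite ι] {A : ι → Set α}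
    (hA : ∀ s, (A s).Infinite) : ∃ y : ι → α, Function.Injective y ∧ ∀ s, y s ∈ A s := by
  classical
  cases nonempty_fintype ι
  choose t htA ht using fun s => (hA s).exists_subset_card_eq (Fintype.card ι)
  obtain ⟨y, hy, hyt⟩ := (Finset.all_card_le_biUnion_card_iff_exists_injective t).1 fun S => by
    rcases S.eq_empty_or_nonempty with rfl | ⟨s, hs⟩
    · simp
    · exact S.card_le_univ.trans
        ((ht s).ge.trans (Finset.card_le_card (Finset.subset_biUnion_of_mem t hs)))
  exact ⟨y, hy, fun s => htA s (hyt s)⟩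

lemma exists_injective_comp_forall_nhds_uncountable {ι X Y : Type*} [Finite ι]
    [TopologicalSpace X] [SecondCountableTopology X] (g : X → Y) {V : ι → Set X}
    (hV : ∀ s, ¬ (g '' V s).Countable) :
    ∃ x : ι → X, Function.Injective (g ∘ x) ∧
      ∀ s, x s ∈ V s ∧ ∀ U ∈ nhds (x s), ¬ (g '' U).Countable := by
  have hinf : ∀ s, (g '' (V s) \ g '' {x | ∃ U ∈ nhds x, (g '' U).Countable}).Infinite :=
    fun s hfin => hV s <| (hfin.countable.union
      (countable_image_setOf_exists_nhds_countable g)).mono (by simp)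
  obtain ⟨y, hy, hyV⟩ := exists_injective_forall_mem_of_infinite hinf
  choose x hxV hxy using fun s => (hyV s).1
  refine ⟨x, ?_, fun s => ⟨hxV s, fun U hU hgU => (hyV s).2 ⟨x s, ⟨U, hU, hgU⟩, hxy s⟩⟩⟩
  rwa [show g ∘ x = y from funext hxy]

lemma exists_forall_mem_iff_eq {ι N : Type*} [Finite ι] {A : ι → Set N}
    (hinf : ∀ s, (A s).Infinite) (had : ∀ s r, s ≠ r → (A s ∩ A r).Finite) :
    ∃ u : ι → N, ∀ s r, u r ∈ A s ↔ r = s := by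
  have hfin : ∀ r, (⋃ s ∈ ({r}ᶜ : Set ι), A r ∩ A s).Finite := fun r =>
    (toFinite _).biUnion fun s hs => had r s (Ne.symm hs)
  choose u hu hu' using fun r => ((hinf r).sdiff (hfin r)).nonempty
  refine ⟨u, fun s r => ⟨fun h => ?_, fun h => h ▸ hu r⟩⟩
  by_contra hrs
  exact hu' r (mem_biUnion (x := s) (Ne.symm hrs) ⟨hu r, h⟩)

lemma isClopen_setOf_iff {X : Type*} [TopologicalSpace X] {p : X → Prop}
    (hp : IsClopen {x | p x}) (q : Prop) : IsClopen {x | p x ↔ q} := by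
  by_cases hq : q
  · simpa [hq] using hp
  · simpa [hq, compl_ofPred] using hp.compl

section Perfect

variable {N : Type*} {F : (ℕ → ℕ) → Set N}

lemma exists_forall_trace {ι : Type*} [Finite ι] (hF : ∀ n, IsClopen {z | n ∈ F z})
    (hinf : ∀ z, (F z).Infinite) (had : ∀ z z', F z ≠ F z' → (F z ∩ F z').Finite)
    {V : ι → Set (ℕ → ℕ)} (hVo : ∀ s, IsOpen (V s)) (hV : ∀ s, ¬ (F '' V s).Countable) (n : ℕ) :
    ∃ (u : ι → N) (V' : ι → Set (ℕ → ℕ)), ∀ s, (IsOpen (V' s) ∧ ¬ (F '' V' s).Countable) ∧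
      V' s ⊆ V s ∧ ∀ z ∈ V' s, V' s ⊆ PiNat.cylinder z n ∧ ∀ r, u r ∈ F z ↔ r = s := by
  obtain ⟨x, hx, hxV⟩ := exists_injective_comp_forall_nhds_uncountable F hV
  obtain ⟨u, hu⟩ := exists_forall_mem_iff_eq (fun s => hinf (x s))
    fun s r hsr => had _ _ (hx.ne hsr)
  let V' : ι → Set (ℕ → ℕ) := fun s =>
    V s ∩ PiNat.cylinder (x s) n ∩ ⋂ r, {z | u r ∈ F z ↔ r = s}
  have hV'o : ∀ s, IsOpen (V' s) := fun s =>
    ((hVo s).inter (PiNat.isOpen_cylinder _ _ _)).inter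
      (isOpen_iInter_of_finite fun r => (isClopen_setOf_iff (hF (u r)) _).2)
  have hxV' : ∀ s, x s ∈ V' s := fun s =>
    ⟨⟨(hxV s).1, PiNat.self_mem_cylinder _ _⟩, mem_iInter.2 (hu s)⟩
  refine ⟨u, V', fun s => ⟨⟨hV'o s, (hxV s).2 _ ((hV'o s).mem_nhds (hxV' s))⟩,
    inter_subset_left.trans inter_subset_left, fun z hz => ⟨fun z' hz' => ?_, mem_iInter.1 hz.2⟩⟩⟩
  rw [PiNat.mem_cylinder_iff_eq.1 hz.1.2]
  exact hz'.1.2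

lemma exists_trace_scheme (hF : ∀ n, IsClopen {z | n ∈ F z}) (hinf : ∀ z, (F z).Infinite)
    (had : ∀ z z', F z ≠ F z' → (F z ∩ F z').Finite) (hunc : ¬ (range F).Countable) :
    ∃ (V : List Bool → Set (ℕ → ℕ)) (u : List Bool → N), (∀ s, (V s).Nonempty) ∧
      ∀ s j, V (s ++ [j]) ⊆ V s ∧ ∀ z ∈ V (s ++ [j]),
        V (s ++ [j]) ⊆ PiNat.cylinder z (s.length + 1) ∧
          ∀ t, t.length = s.length → (u t ∈ F z ↔ t = s) := by
  obtain ⟨P, u, -, h⟩ := exists_levelwise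
    (⟨univ, isOpen_univ, by rwa [image_univ]⟩ :
      {V : Set (ℕ → ℕ) // IsOpen V ∧ ¬ (F '' V).Countable})
    (fun n P u Q => ∀ s j, (Q s j).1 ⊆ (P s).1 ∧
      ∀ z ∈ (Q s j).1, (Q s j).1 ⊆ PiNat.cylinder z (n + 1) ∧ ∀ r, u r ∈ F z ↔ r = s)
    fun n P => by
      obtain ⟨u, V', hV'⟩ := exists_forall_trace hF hinf had (fun s => (P s).2.1)
        (fun s => (P s).2.2) (n + 1)
      exact ⟨u, fun s _ => ⟨V' s, (hV' s).1⟩, fun s _ => (hV' s).2⟩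
  refine ⟨fun s => (P s).1, u, fun s => ?_, fun s j => ?_⟩
  · by_contra! he
    exact (P s).2.2 (by simp [he])
  · obtain ⟨hsub, hz⟩ := h s.length ⟨s, rfl⟩ j
    exact ⟨hsub, fun z hzP => ⟨(hz z hzP).1, fun t ht =>
      ((hz z hzP).2 ⟨t, ht⟩).trans Subtype.ext_iff⟩⟩

theorem exists_tree_trace_eq_branch (hF : ∀ n, IsClopen {z | n ∈ F z})
    (hinf : ∀ z, (F z).Infinite) (had : ∀ z z', F z ≠ F z' → (F z ∩ F z').Finite)
    (hunc : ¬ (range F).Countable) :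
    ∃ (u : List Bool → N) (ζ : (ℕ → Bool) → ℕ → ℕ), Function.Injective u ∧
      ∀ x, u ⁻¹' F (ζ x) = branch x := by
  obtain ⟨V, u, hne, hV⟩ := exists_trace_scheme hF hinf had hunc
  have hstep : ∀ x n, V (initSeg x (n + 1)) ⊆ V (initSeg x n) ∧ ∀ z ∈ V (initSeg x (n + 1)),
      V (initSeg x (n + 1)) ⊆ PiNat.cylinder z (n + 1) ∧
        ∀ t, t.length = n → (u t ∈ F z ↔ t = initSeg x n) := fun x n => by
    simpa [initSeg_succ] using hV (initSeg x n) (x n)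
  choose ζ hζ using fun x => exists_forall_mem_closure (V := fun n => V (initSeg x n))
    (antitone_nat_of_succ_le fun n => (hstep x n).1) (fun n => hne _) <| by
      rintro (_ | n) z hz
      · simp
      · exact ((hstep x n).2 z hz).1
  have htrace : ∀ x, u ⁻¹' F (ζ x) = branch x := fun x => by
    ext t
    rw [mem_branch_iff, eq_comm]
    exact closure_minimal (fun z hz => ((hstep x t.length).2 z hz).2 t rfl)
      (isClopen_setOf_iff (hF (u t)) _).1 (hζ x (t.length + 1))
  refine ⟨u, ζ, fun s t hst => antisymm (r := (· <+: ·)) ?_ ?_, htrace⟩ <;>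
  · refine prefix_of_forall_mem_branch fun x => ?_
    simp only [← htrace, mem_preimage, hst, imp_self]

end Perfect

/-! ### Analytic families -/

section Analytic

variable {N : Type*} {𝒜 : Set (Set N)}

lemma AnalyticFam.exists_isClopen_range_eq (hana : AnalyticFam 𝒜) (hne : 𝒜.Nonempty) :
    ∃ F : (ℕ → ℕ) → Set N, (∀ n, IsClopen {z | n ∈ F z}) ∧ range F = 𝒜 := by
  classical
  let φ : (N → Bool) → Set N := fun f => {n | f n = true}
  have hφ : Function.Surjective φ := fun A => ⟨fun n => decide (n ∈ A), by ext; simp [φ]⟩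
  rw [AnalyticFam, MeasureTheory.AnalyticSet] at hana
  rcases hana with hempty | ⟨g, hg, hgr⟩
  · exact absurd hempty (hne.preimage hφ).ne_empty
  · refine ⟨φ ∘ g, fun n => ?_, ?_⟩
    · exact (isClopen_discrete {true}).preimage ((continuous_apply n).comp hg)
    · rw [range_comp, hgr]
      exact image_preimage_eq 𝒜 hφ

theorem statement_18_general (hinf : ∀ a ∈ 𝒜, a.Infinite)
    (had : ∀ a ∈ 𝒜, ∀ b ∈ 𝒜, a ≠ b → (a ∩ b).Finite)
    (hunc : ¬ 𝒜.Countable) (hana : AnalyticFam 𝒜) :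
    ∃ (u : List Bool → N) (a : (ℕ → Bool) → Set N),
      Function.Injective u ∧ Function.Injective a ∧ (∀ x, a x ∈ 𝒜) ∧
      (∀ x, u '' branch x ⊆ a x) ∧
      (∀ c : Set (List Bool), (∀ x, (c ∩ branch x).Finite) →
        u '' c ∈ orthFamC 𝒜) := by
  obtain ⟨F, hF, rfl⟩ := hana.exists_isClopen_range_eq
    (nonempty_iff_ne_empty.2 fun h => hunc (h ▸ countable_empty))
  simp only [forall_mem_range] at hinf had
  obtain ⟨w, ζ, hw, hζ⟩ := exists_tree_trace_eq_branch hF hinf had hunc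
  have hwad : ∀ z z', w ⁻¹' F z ≠ w ⁻¹' F z' → (w ⁻¹' F z ∩ w ⁻¹' F z').Finite :=
    fun z z' h => Set.Finite.preimage (f := w) hw.injOn (had z z' (ne_of_apply_ne _ h))
  obtain ⟨v, hv, hvtame⟩ := exists_isDyadicEmbedding_forall_tame (fun t => hF (w t)) hwad
    fun z x h => by
      rw [← hζ] at h ⊢
      exact not_imp_comm.1 (hwad z (ζ x)) h
  choose γ hγ using hv.exists_image_branch_subset
  refine ⟨w ∘ v, fun x => F (ζ (γ x)), hw.comp hv.injective, fun x y hxy => ?_,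
    fun x => mem_range_self _, fun x => ?_, fun c hc => ?_⟩
  · have hbranch : branch (γ x) = branch (γ y) := by
      simpa only [hζ] using congrArg (w ⁻¹' ·) hxy
    exact hv.eq_of_image_branch_subset (hγ x) (hbranch ▸ hγ y)
  · rw [image_comp, image_subset_iff, hζ]
    exact hγ x
  · rintro _ ⟨z, rfl⟩
    rw [image_comp, inter_comm, ← image_inter_preimage, inter_comm]
    exact (finite_of_forall_tame
      (fun i => (hvtame i z).mono (inter_subset_inter_right _ (image_subset_range v c)))
      fun y => (hv.finite_image_inter_branch hc y).subset
        (inter_subset_inter_left _ inter_subset_right)).image w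

end Analytic

/-- every uncountable analytic almost disjoint family 𝒜 on a countable
set N contains a copy of the family of branches of the dyadic tree: there are
injections u : 2^{<ω} → N and a : 2^ω → 𝒜 with u(b_x) ⊆ a(x) for every x, and
u(c) ∈ 𝒜^⊥ whenever c meets every branch in a finite set. -/
theorem statement_18 (N : Type) [Countable N] [Infinite N] (𝒜 : Set (Set N))
    (hinf : ∀ a ∈ 𝒜, a.Infinite)
    (had : ∀ a ∈ 𝒜, ∀ b ∈ 𝒜, a ≠ b → (a ∩ b).Finite)
    (hunc : ¬ 𝒜.Countable) (hana : AnalyticFam 𝒜) :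
    ∃ (u : List Bool → N) (a : (ℕ → Bool) → Set N),
      Function.Injective u ∧ Function.Injective a ∧ (∀ x, a x ∈ 𝒜) ∧
      (∀ x, u '' branch x ⊆ a x) ∧
      (∀ c : Set (List Bool), (∀ x, (c ∩ branch x).Finite) →
        u '' c ∈ orthFamC 𝒜) :=
  statement_18_general hinf had hunc hana
end

section
/- Let p⃗ be a finite subset of [1,∞) with |p⃗| ≥ 2, and let (x_n)_{n<ω} be a p⃗-sequence in a normed space. Then there exist an infinite set A ⊆ ω and a subset q⃗ ⊆ p⃗ with |q⃗| = 2 such that the subsequence (x_n)_{n∈A} is a q⃗-sequence. -/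
open Set

variable {E : Type*} [NormedAddCommGroup E] [NormedSpace ℝ E]

/-- `(x_n)_{n ∈ A}` is an ℓ_p-sequence: for some constant C > 0, for all finitely many
distinct indices in A and all scalars, the norm of the linear combination is within a
factor C of the ℓ_p-norm of the coefficients. -/
def IsLpSeq (p : ℝ) (A : Set ℕ) (x : ℕ → E) : Prop :=
  ∃ C > (0 : ℝ), ∀ s : Finset ℕ, ↑s ⊆ A → ∀ l : ℕ → ℝ,
    (1 / C) * (∑ i ∈ s, |l i| ^ p) ^ (1 / p) ≤ ‖∑ i ∈ s, l i • x i‖ ∧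
    ‖∑ i ∈ s, l i • x i‖ ≤ C * (∑ i ∈ s, |l i| ^ p) ^ (1 / p)

/-- `(x_n)_{n ∈ A}` is P-saturated: every infinite subset of A contains a further
infinite subset on which the sequence is an ℓ_p-sequence for some p ∈ P. -/
def Saturated (P : Set ℝ) (A : Set ℕ) (x : ℕ → E) : Prop :=
  ∀ B ⊆ A, B.Infinite → ∃ B' ⊆ B, B'.Infinite ∧ ∃ p ∈ P, IsLpSeq p B' x

/-- `(x_n)_{n ∈ A}` is a P-sequence: it is P-saturated and A admits no finite
decomposition into pieces each of which is Q-saturated for some proper subset Q ⊊ P. -/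
def IsPvecSeq (P : Set ℝ) (A : Set ℕ) (x : ℕ → E) : Prop :=
  Saturated P A x ∧
    ¬ ∃ (k : ℕ) (As : Fin k → Set ℕ), A = ⋃ i, As i ∧
        ∀ i, ∃ Q : Set ℝ, Q ⊂ P ∧ Saturated Q (As i) x

/-!
Every finite cover of the index set has a piece that is not saturated for any proper subset of `P`,
so compactness gives an ultrafilter `u` each of whose members contains ℓ_q-subsequences for every
`q ∈ P`. For a fixed exponent and a fixed constant, the ℓ_p-estimates define a closed set of
subsequences, so the infinite game in which one player chooses members of `u` and the other
chooses increasing elements of them is determined. Diagonalising over all exponents and constants,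
one finds a single `p ∈ P` and a decreasing sequence of sets `F k ∈ u` such that every set meeting
all the `F k` contains an ℓ_p-subsequence. For `q ∈ P` different from `p`, choose ℓ_q-subsequences
`B k ⊆ F k`. An infinite subset of `⋃ k, B k` either has infinite intersection with some `B k` or
meets all the `F k`, and a piece of a finite cover of `⋃ k, B k` that has infinite intersection
with infinitely many `B k` contains both kinds of subsequences. Hence `⋃ k, B k` carries a
`{p, q}`-sequence.
-/

open Filter

section Diagonal

variable {D : ℕ → Set ℕ} {K : Set (Finset ℕ)} {S T : Set ℕ}

/-- `T` is diagonal for `D`: each element `m` of `T` restricts all later elements to `D m`. The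
least element of `T` is unrestricted. -/
def IsDiagonal (D : ℕ → Set ℕ) (T : Set ℕ) : Prop :=
  ∀ m ∈ T, ∀ n ∈ T, m < n → n ∈ D m

/-- The numbers that may follow, in a diagonal set for `D`, any elements up to `k`. -/
def diagonalTail (D : ℕ → Set ℕ) (k : ℕ) : Set ℕ :=
  {n | ∀ m ≤ k, m < n ∧ n ∈ D m}

/-- Some infinite subset of `S` has all its finite subsets in `K`. The families `K` of interest
consist of the finite sets on which an ℓ_p-estimate holds. -/
def HasHomogeneous (K : Set (Finset ℕ)) (S : Set ℕ) : Prop :=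
  ∃ T ⊆ S, T.Infinite ∧ ∀ s : Finset ℕ, ↑s ⊆ T → s ∈ K

theorem IsDiagonal.mono (hT : IsDiagonal D T) (hST : S ⊆ T) : IsDiagonal D S :=
  fun m hm n hn => hT m (hST hm) n (hST hn)

theorem antitone_diagonalTail (D : ℕ → Set ℕ) : Antitone (diagonalTail D) :=
  fun _ _ hkl _ hn m hm => hn m (hm.trans hkl)

theorem diagonalTail_mem {l : Filter ℕ} (hl : l ≤ atTop) (hD : ∀ m, D m ∈ l) (k : ℕ) :
    diagonalTail D k ∈ l :=
  (eventually_all_finite (finite_Iic k)).2 fun m _ =>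
    ((eventually_gt_atTop m).filter_mono hl).and (hD m)

theorem exists_infinite_isDiagonal (hS : ∀ k, (S ∩ diagonalTail D k).Nonempty) :
    ∃ T ⊆ S, T.Infinite ∧ IsDiagonal D T := by
  obtain ⟨f, hfS, hf⟩ := exists_seq_of_forall_finset_exists (· ∈ S)
    (fun m n => m < n ∧ n ∈ D m) fun s _ => by
      obtain ⟨n, hnS, hn⟩ := hS (s.sup id)
      exact ⟨n, hnS, fun m hm => hn m (Finset.le_sup (f := id) hm)⟩
  have hmono : StrictMono f := fun m n hmn => (hf m n hmn).1
  refine ⟨range f, range_subset_iff.2 hfS, infinite_range_of_injective hmono.injective, ?_⟩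
  rintro _ ⟨m, rfl⟩ _ ⟨n, rfl⟩ hmn
  exact (hf m n (hmono.lt_iff_lt.1 hmn)).2

theorem exists_forall_isDiagonal_sdiff_Iio {ι : Type*} [Countable ι] {l : Filter ℕ}
    {D : ι → ℕ → Set ℕ} (hD : ∀ i m, D i m ∈ l) :
    ∃ F : ℕ → Set ℕ, (∀ m, F m ∈ l) ∧
      ∀ T, IsDiagonal F T → ∀ i, ∃ k, IsDiagonal (D i) (T \ Iio k) := by
  obtain ⟨e, he⟩ := exists_injective_nat ι
  have hfin (m : ℕ) : {i | e i ≤ m}.Finite := (finite_Iic m).preimage he.injOn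
  refine ⟨fun m => ⋂ i ∈ {i | e i ≤ m}, D i m,
    fun m => (biInter_mem (hfin m)).2 fun i _ => hD i m, fun T hT i => ⟨e i, ?_⟩⟩
  intro m hm n hn hmn
  have him : e i ≤ m := not_lt.1 hm.2
  exact mem_iInter₂.1 (hT m hm.1 n hn.1 hmn) i him

/-- The positions `s` from which the player choosing members of `l` can force the opponent, who
picks elements of them one at a time, to leave `K` after finitely many moves. -/
inductive Barred (l : Filter ℕ) (K : Set (Finset ℕ)) : Finset ℕ → Prop
  | of_notMem {s : Finset ℕ} : s ∉ K → Barred l K s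
  | of_forall_insert {s : Finset ℕ} {X : Set ℕ} :
      X ∈ l → (∀ n ∈ X, Barred l K (insert n s)) → Barred l K s

theorem Barred.exists_isDiagonal {l : Filter ℕ} {s : Finset ℕ} (hs : Barred l K s) :
    ∃ D : ℕ → Set ℕ, (∀ m, D m ∈ l) ∧ ∀ T : Set ℕ, T.Infinite → IsDiagonal D T →
      ∃ t : Finset ℕ, ↑t ⊆ T ∧ s ∪ t ∉ K := by
  induction hs with
  | of_notMem hs => exact ⟨fun _ => univ, fun _ => univ_mem, fun T _ _ => ⟨∅, by simp, by simpa⟩⟩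
  | @of_forall_insert s X hX _ ih =>
    choose! G hG hGT using ih
    refine ⟨fun m => X ∩ ⋂ k ∈ X ∩ Iio m, G k m, fun m => inter_mem hX ?_, fun T hT hTD => ?_⟩
    · exact (biInter_mem ((finite_Iio m).inter_of_right X)).2 fun k hk => hG k hk.1 m
    -- The least element of `T` may lie outside `X`, so the first move is a later element `k`.
    obtain ⟨j, hjT⟩ := hT.nonempty
    obtain ⟨k, hkT, hjk⟩ := hT.exists_gt j
    have hkX : k ∈ X := (hTD j hjT k hkT hjk).1
    obtain ⟨t, htT, htK⟩ := hGT k hkX (T \ Iic k) (hT.sdiff (finite_Iic k))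
      fun m hm n hn hmn =>
        have hkm : k < m := not_le.1 hm.2
        mem_iInter₂.1 (hTD m hm.1 n hn.1 hmn).2 k ⟨hkX, hkm⟩
    refine ⟨insert k t, ?_, by rwa [Finset.union_insert, ← Finset.insert_union]⟩
    rw [Finset.coe_insert]
    exact insert_subset hkT (htT.trans sdiff_subset)

theorem eventually_not_barred_insert {u : Ultrafilter ℕ} {s : Finset ℕ} (hs : ¬ Barred u K s) :
    ∀ᶠ n in (u : Filter ℕ), ¬ Barred u K (insert n s) :=
  Ultrafilter.eventually_not.2 fun h => hs (.of_forall_insert h fun _ => id)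

theorem exists_hasHomogeneous_of_not_barred {u : Ultrafilter ℕ} (hK : ¬ Barred u K ∅) :
    ∃ D : ℕ → Set ℕ, (∀ m, D m ∈ u) ∧
      ∀ T : Set ℕ, T.Infinite → IsDiagonal D T → HasHomogeneous K T := by
  refine ⟨fun m => {n | ∀ s ⊆ Finset.Iic m, ¬ Barred u K s → ¬ Barred u K (insert n s)},
    fun m => ?_, fun T hT hTD => ?_⟩
  · have hevent : ∀ᶠ n in (u : Filter ℕ), ∀ s ∈ (Finset.Iic m).powerset,
        ¬ Barred u K s → ¬ Barred u K (insert n s) :=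
      (eventually_all_finset _).2 fun s _ =>
        eventually_imp_distrib_left.2 eventually_not_barred_insert
    exact hevent.mono fun n hn s hs => hn s (Finset.mem_powerset.2 hs)
  obtain ⟨k, hkT⟩ := hT.nonempty
  refine ⟨T \ Iic k, sdiff_subset, hT.sdiff (finite_Iic k), fun s hs => ?_⟩
  suffices hbar : ¬ Barred u K s from not_not.1 fun hsK => hbar (.of_notMem hsK)
  induction s using Finset.induction_on_max with
  | empty => exact hK
  | insert n s hsn ih =>
    rw [Finset.coe_insert, insert_subset_iff] at hs
    obtain ⟨hn, hs⟩ := hs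
    let m := (insert k s).max' (Finset.insert_nonempty k s)
    have hm : m ∈ insert k s := Finset.max'_mem _ _
    have hsm : s ⊆ Finset.Iic m := fun a ha =>
      Finset.mem_Iic.2 (Finset.le_max' _ _ (Finset.mem_insert_of_mem ha))
    obtain ⟨hmT, hmn⟩ : m ∈ T ∧ m < n := by
      rcases Finset.mem_insert.1 hm with hmk | hms
      · exact hmk ▸ ⟨hkT, not_le.1 hn.2⟩
      · exact ⟨(hs hms).1, hsn m hms⟩
    exact hTD m hmT n hn.1 hmn s hsm (ih hs)

theorem exists_isDiagonal_hasHomogeneous_or_not (u : Ultrafilter ℕ) (K : Set (Finset ℕ)) :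
    ∃ D : ℕ → Set ℕ, (∀ m, D m ∈ u) ∧
      ((∀ T : Set ℕ, T.Infinite → IsDiagonal D T → HasHomogeneous K T) ∨
        ∀ T : Set ℕ, IsDiagonal D T → ¬ HasHomogeneous K T) := by
  by_cases hK : Barred u K ∅
  · obtain ⟨D, hD, hDK⟩ := hK.exists_isDiagonal
    refine ⟨D, hD, .inr ?_⟩
    rintro T hT ⟨S, hST, hS, hSK⟩
    obtain ⟨t, htS, htK⟩ := hDK S hS (hT.mono hST)
    exact htK (by simpa only [Finset.empty_union] using hSK t htS)
  · obtain ⟨D, hD, hDK⟩ := exists_hasHomogeneous_of_not_barred hK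
    exact ⟨D, hD, .inl hDK⟩

theorem exists_forall_isDiagonal_hasHomogeneous {ι : Type*} [Countable ι] {u : Ultrafilter ℕ}
    (hu : (u : Filter ℕ) ≤ atTop) {K : ι → Set (Finset ℕ)} {A : Set ℕ} (hA : A ∈ u)
    (hK : ∀ S ⊆ A, S.Infinite → ∃ i, HasHomogeneous (K i) S) :
    ∃ i, ∃ D : ℕ → Set ℕ, (∀ m, D m ∈ u) ∧
      ∀ T : Set ℕ, T.Infinite → IsDiagonal D T → HasHomogeneous (K i) T := by
  choose D hD hDK using fun i => exists_isDiagonal_hasHomogeneous_or_not u (K i)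
  obtain ⟨F, hF, hFD⟩ := exists_forall_isDiagonal_sdiff_Iio hD
  obtain ⟨T, hTA, hT, hTF⟩ := exists_infinite_isDiagonal fun k =>
    u.nonempty_of_mem (inter_mem hA (diagonalTail_mem hu hF k))
  obtain ⟨i, S, hST, hS, hSK⟩ := hK T hTA hT
  obtain ⟨k, hk⟩ := hFD T hTF i
  have hhom : HasHomogeneous (K i) (T \ Iio k) :=
    ⟨S \ Iio k, sdiff_subset_sdiff_left hST, hS.sdiff (finite_Iio k),
      fun s hs => hSK s (hs.trans sdiff_subset)⟩
  exact ⟨i, D i, hD i, (hDK i).resolve_right fun hnot => hnot _ hk hhom⟩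

end Diagonal

section LpSequences

variable {p q C C' : ℝ} {P : Set ℝ} {A B S : Set ℕ} {x : ℕ → E}

/-- The finite sets on which the ℓ_p-estimates hold with constant `C`. -/
def lpBounded (p C : ℝ) (x : ℕ → E) : Set (Finset ℕ) :=
  {s | ∀ l : ℕ → ℝ,
    (1 / C) * (∑ i ∈ s, |l i| ^ p) ^ (1 / p) ≤ ‖∑ i ∈ s, l i • x i‖ ∧
    ‖∑ i ∈ s, l i • x i‖ ≤ C * (∑ i ∈ s, |l i| ^ p) ^ (1 / p)}

/-- `(x_n)_{n ∈ S}` has an infinite subsequence that is an ℓ_p-sequence. -/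
def HasLpSubseq (p : ℝ) (S : Set ℕ) (x : ℕ → E) : Prop :=
  ∃ T ⊆ S, T.Infinite ∧ IsLpSeq p T x

theorem lpBounded_mono (hC : 0 < C) (hCC' : C ≤ C') :
    lpBounded p C x ⊆ lpBounded p C' x := by
  intro s hs l
  have hnonneg : 0 ≤ (∑ i ∈ s, |l i| ^ p) ^ (1 / p) := by positivity
  exact ⟨(mul_le_mul_of_nonneg_right (one_div_le_one_div_of_le hC hCC') hnonneg).trans (hs l).1,
    (hs l).2.trans (mul_le_mul_of_nonneg_right hCC' hnonneg)⟩

theorem isLpSeq_iff_exists_nat :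
    IsLpSeq p A x ↔ ∃ N : ℕ, ∀ s : Finset ℕ, ↑s ⊆ A → s ∈ lpBounded p (N + 1) x := by
  constructor
  · rintro ⟨C, hC, hA⟩
    obtain ⟨N, hN⟩ := exists_nat_ge C
    exact ⟨N, fun s hs => lpBounded_mono hC (hN.trans (lt_add_one _).le) (hA s hs)⟩
  · rintro ⟨N, hA⟩
    exact ⟨N + 1, by positivity, hA⟩

theorem hasLpSubseq_iff_exists_nat :
    HasLpSubseq p S x ↔ ∃ N : ℕ, HasHomogeneous (lpBounded p (N + 1) x) S := by
  simp only [HasLpSubseq, HasHomogeneous, isLpSeq_iff_exists_nat]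
  exact ⟨fun ⟨T, hTS, hT, N, hN⟩ => ⟨N, T, hTS, hT, hN⟩,
    fun ⟨N, T, hTS, hT, hN⟩ => ⟨T, hTS, hT, N, hN⟩⟩

theorem IsLpSeq.mono (hA : IsLpSeq p A x) (hBA : B ⊆ A) : IsLpSeq p B x := by
  obtain ⟨C, hC, hA⟩ := hA
  exact ⟨C, hC, fun s hs => hA s (hs.trans hBA)⟩

theorem HasLpSubseq.mono (hB : HasLpSubseq p B x) (hBA : B ⊆ A) : HasLpSubseq p A x := by
  obtain ⟨T, hTB, hT⟩ := hB
  exact ⟨T, hTB.trans hBA, hT⟩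

theorem IsLpSeq.exists_norm_sum_bounds (hA : IsLpSeq p A x) :
    ∃ C > (0 : ℝ), ∀ s : Finset ℕ, ↑s ⊆ A →
      (1 / C) * (s.card : ℝ) ^ (1 / p) ≤ ‖∑ i ∈ s, x i‖ ∧
      ‖∑ i ∈ s, x i‖ ≤ C * (s.card : ℝ) ^ (1 / p) := by
  obtain ⟨C, hC, hA⟩ := hA
  exact ⟨C, hC, fun s hs => by simpa using hA s hs fun _ => 1⟩

theorem IsLpSeq.one_div_le_one_div (hA : A.Infinite) (hp : IsLpSeq p A x) (hq : IsLpSeq q A x) :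
    1 / p ≤ 1 / q := by
  obtain ⟨C, hC, hpC⟩ := hp.exists_norm_sum_bounds
  obtain ⟨D, -, hqD⟩ := hq.exists_norm_sum_bounds
  have hbound (n : ℕ) (hn : 0 < n) : (n : ℝ) ^ (1 / p - 1 / q) ≤ C * D := by
    obtain ⟨s, hs, rfl⟩ := hA.exists_subset_card_eq n
    have hcard : (0 : ℝ) < s.card := by exact_mod_cast hn
    have hle := (hpC s hs).1.trans (hqD s hs).2
    rw [one_div_mul_eq_div, div_le_iff₀' hC, ← mul_assoc] at hle
    rwa [Real.rpow_sub hcard, div_le_iff₀ (Real.rpow_pos_of_pos hcard _)]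
  by_contra! hlt
  have htendsto := (tendsto_rpow_atTop (sub_pos.2 hlt)).comp (tendsto_natCast_atTop_atTop (R := ℝ))
  obtain ⟨n, hn, hn0⟩ := ((htendsto.eventually_gt_atTop (C * D)).and (eventually_gt_atTop 0)).exists
  exact (hbound n hn0).not_gt hn

theorem IsLpSeq.exponent_unique (hA : A.Infinite) (hp : IsLpSeq p A x) (hq : IsLpSeq q A x) :
    p = q := by
  simpa using le_antisymm (hp.one_div_le_one_div hA hq) (hq.one_div_le_one_div hA hp)

theorem Saturated.exists_hasLpSubseq (hA : Saturated P A x) (hSA : S ⊆ A) (hS : S.Infinite) :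
    ∃ p ∈ P, HasLpSubseq p S x := by
  obtain ⟨T, hTS, hT, p, hp, hTp⟩ := hA S hSA hS
  exact ⟨p, hp, T, hTS, hT, hTp⟩

theorem Saturated.mem_of_hasLpSubseq (hA : Saturated P A x) (hp : HasLpSubseq p A x) : p ∈ P := by
  obtain ⟨T, hTA, hT, hTp⟩ := hp
  obtain ⟨r, hr, T', hT'T, hT', hTr⟩ := hA.exists_hasLpSubseq hTA hT
  exact (hTp.mono hT'T).exponent_unique hT' hTr ▸ hr

theorem Saturated.hasLpSubseq_of_not_saturated (hA : Saturated P A x) (hBA : B ⊆ A)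
    (hB : ¬ Saturated (P \ {q}) B x) : HasLpSubseq q B x := by
  simp only [Saturated, not_forall] at hB
  obtain ⟨S, hSB, hS, hno⟩ := hB
  obtain ⟨p, hp, hSp⟩ := hA.exists_hasLpSubseq (hSB.trans hBA) hS
  obtain rfl : p = q := by
    by_contra hpq
    obtain ⟨T, hTS, hT, hTp⟩ := hSp
    exact hno ⟨T, hTS, hT, p, ⟨hp, hpq⟩, hTp⟩
  exact hSp.mono hSB

theorem Saturated.exists_exponent (hP : P.Countable) (hsat : Saturated P A x) {u : Ultrafilter ℕ}
    (hu : (u : Filter ℕ) ≤ atTop) (hA : A ∈ u) :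
    ∃ p ∈ P, ∃ F : ℕ → Set ℕ, (∀ k, F k ∈ u) ∧ Antitone F ∧
      ∀ S, (∀ k, (S ∩ F k).Nonempty) → HasLpSubseq p S x := by
  have : Countable P := hP.to_subtype
  obtain ⟨⟨⟨p, hp⟩, N⟩, D, hD, hDp⟩ := exists_forall_isDiagonal_hasHomogeneous hu
    (K := fun i : P × ℕ => lpBounded i.1 (i.2 + 1) x) hA fun S hSA hS => by
      obtain ⟨p, hp, hSp⟩ := hsat.exists_hasLpSubseq hSA hS
      obtain ⟨N, hN⟩ := hasLpSubseq_iff_exists_nat.1 hSp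
      exact ⟨⟨⟨p, hp⟩, N⟩, hN⟩
  refine ⟨p, hp, diagonalTail D, diagonalTail_mem hu hD, antitone_diagonalTail D, fun S hS => ?_⟩
  obtain ⟨T, hTS, hT, hTD⟩ := exists_infinite_isDiagonal hS
  exact (hasLpSubseq_iff_exists_nat.2 ⟨N, hDp T hT hTD⟩).mono hTS

end LpSequences

section Ultrafilter

variable {P : Set ℝ} {A : Set ℕ} {x : ℕ → E}

theorem IsPvecSeq.exists_ultrafilter_not_saturated (hA : IsPvecSeq P A x) :
    ∃ u : Ultrafilter ℕ, ∀ B, (∃ Q ⊂ P, Saturated Q (A \ B) x) → B ∈ u := by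
  refine Ultrafilter.exists_ultrafilter_of_finite_inter_nonempty
    {B | ∃ Q ⊂ P, Saturated Q (A \ B) x} fun 𝓑 h𝓑 => ?_
  by_contra hempty
  refine hA.2 ⟨𝓑.card, fun i => A \ (𝓑.equivFin.symm i : Set ℕ), ?_,
    fun i => h𝓑 (𝓑.equivFin.symm i).2⟩
  refine Subset.antisymm (fun n hn => ?_) (iUnion_subset fun _ => sdiff_subset)
  obtain ⟨B, hB, hnB⟩ : ∃ B ∈ 𝓑, n ∉ B := by
    by_contra! hall
    exact hempty ⟨n, hall⟩
  exact mem_iUnion.2 ⟨𝓑.equivFin ⟨B, hB⟩, hn, by simpa using hnB⟩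

theorem IsPvecSeq.exists_ultrafilter (hP : P.Nonempty) (hA : IsPvecSeq P A x) :
    ∃ u : Ultrafilter ℕ, (u : Filter ℕ) ≤ atTop ∧ A ∈ u ∧
      ∀ B ∈ u, ∀ q ∈ P, HasLpSubseq q B x := by
  obtain ⟨u, hu⟩ := hA.exists_ultrafilter_not_saturated
  have hfinite (B : Set ℕ) (hB : (A \ B).Finite) : B ∈ u :=
    hu B ⟨∅, hP.empty_ssubset, fun S hSB hS => (hS (hB.subset hSB)).elim⟩
  refine ⟨u, ?_, hfinite A (by simp), fun B hB q hq => ?_⟩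
  · rw [← Nat.cofinite_eq_atTop]
    exact fun B hB => hfinite B ((mem_cofinite.1 hB).subset fun _ hn => hn.2)
  · have hnot : ¬ Saturated (P \ {q}) (A ∩ B) x := fun hsat =>
      u.compl_notMem_iff.2 hB
        (hu Bᶜ ⟨P \ {q}, sdiff_singleton_ssubset.2 hq, by rwa [sdiff_compl]⟩)
    exact (hA.1.hasLpSubseq_of_not_saturated inter_subset_left hnot).mono inter_subset_right

end Ultrafilter

section Union

variable {p q : ℝ} {F B : ℕ → Set ℕ} {x : ℕ → E}

theorem saturated_pair_iUnion (hF : Antitone F)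
    (hp : ∀ S, (∀ k, (S ∩ F k).Nonempty) → HasLpSubseq p S x) (hBF : ∀ k, B k ⊆ F k)
    (hBq : ∀ k, IsLpSeq q (B k) x) : Saturated {p, q} (⋃ k, B k) x := by
  intro S hSB hS
  by_cases hinf : ∃ k, (S ∩ B k).Infinite
  · obtain ⟨k, hk⟩ := hinf
    exact ⟨S ∩ B k, inter_subset_left, hk, q, by simp, (hBq k).mono inter_subset_right⟩
  have hfin (k : ℕ) : (S ∩ B k).Finite := not_infinite.1 fun hk => hinf ⟨k, hk⟩
  obtain ⟨T, hTS, hT, hTp⟩ := hp S fun k => by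
    have hlow : (⋃ j ∈ Iio k, S ∩ B j).Finite := (finite_Iio k).biUnion fun j _ => hfin j
    obtain ⟨n, hnS, hn⟩ := (hS.sdiff hlow).nonempty
    obtain ⟨i, hi⟩ := mem_iUnion.1 (hSB hnS)
    have hki : k ≤ i := not_lt.1 fun hik => hn (mem_biUnion hik ⟨hnS, hi⟩)
    exact ⟨n, hnS, hF hki (hBF i hi)⟩
  exact ⟨T, hTS, hT, p, by simp, hTp⟩

theorem exists_infinite_setOf_infinite_inter {ι : Type*} [Finite ι] {V : ι → Set ℕ}
    (hV : ⋃ k, B k ⊆ ⋃ i, V i) (hB : ∀ k, (B k).Infinite) :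
    ∃ i, {k | (V i ∩ B k).Infinite}.Infinite := by
  have hpiece (k : ℕ) : ∃ i, (V i ∩ B k).Infinite := by
    by_contra! hfin
    refine hB k ((finite_iUnion hfin).subset fun n hn => ?_)
    obtain ⟨i, hi⟩ := mem_iUnion.1 (hV (mem_iUnion.2 ⟨k, hn⟩))
    exact mem_iUnion.2 ⟨i, hi, hn⟩
  choose c hc using hpiece
  obtain ⟨i, hi⟩ := Finite.exists_infinite_fiber c
  refine ⟨i, (infinite_coe_iff.1 hi).mono ?_⟩
  rintro k rfl
  exact hc k

theorem isPvecSeq_pair_iUnion (hF : Antitone F)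
    (hp : ∀ S, (∀ k, (S ∩ F k).Nonempty) → HasLpSubseq p S x) (hBF : ∀ k, B k ⊆ F k)
    (hB : ∀ k, (B k).Infinite) (hBq : ∀ k, IsLpSeq q (B k) x) :
    IsPvecSeq {p, q} (⋃ k, B k) x := by
  refine ⟨saturated_pair_iUnion hF hp hBF hBq, ?_⟩
  rintro ⟨N, V, hV, hVQ⟩
  obtain ⟨i, hi⟩ := exists_infinite_setOf_infinite_inter hV.subset hB
  obtain ⟨Q, hQ, hsat⟩ := hVQ i
  have hpQ : p ∈ Q := hsat.mem_of_hasLpSubseq <| hp _ fun k => by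
    obtain ⟨j, hj, hkj⟩ := hi.exists_gt k
    obtain ⟨n, hnV, hnB⟩ := Set.Infinite.nonempty hj
    exact ⟨n, hnV, hF hkj.le (hBF j hnB)⟩
  have hqQ : q ∈ Q := by
    obtain ⟨j, hj⟩ := hi.nonempty
    exact hsat.mem_of_hasLpSubseq
      ⟨V i ∩ B j, inter_subset_left, hj, (hBq j).mono inter_subset_right⟩
  exact hQ.2 (pair_subset hpQ hqQ)

end Union

theorem statement_19_general {P : Set ℝ} (hP : P.Countable) (hnt : P.Nontrivial) {A : Set ℕ}
    {x : ℕ → E} (hx : IsPvecSeq P A x) :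
    ∃ B ⊆ A, B.Infinite ∧ ∃ p ∈ P, ∃ q ∈ P, p ≠ q ∧ IsPvecSeq {p, q} B x := by
  obtain ⟨u, hu, hA, huP⟩ := hx.exists_ultrafilter hnt.nonempty
  obtain ⟨p, hp, F, hFu, hF, hFp⟩ := hx.1.exists_exponent hP hu hA
  obtain ⟨q, hq, hqp⟩ := hnt.exists_ne p
  choose B hBF hB hBq using fun k => huP _ (inter_mem hA (hFu k)) q hq
  exact ⟨⋃ k, B k, iUnion_subset fun k => (hBF k).trans inter_subset_left,
    (hB 0).mono (subset_iUnion B 0), p, hp, q, hq, hqp.symm,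
    isPvecSeq_pair_iUnion hF hFp (fun k => (hBF k).trans inter_subset_right) hB hBq⟩

/-- if p⃗ ⊆ [1,∞) is finite with |p⃗| ≥ 2 and (x_n)_{n<ω} is a
p⃗-sequence in a normed space, then some subsequence (x_n)_{n∈A} is a q⃗-sequence for
some q⃗ ⊆ p⃗ with |q⃗| = 2. -/
theorem statement_19 (E : Type) [NormedAddCommGroup E] [NormedSpace ℝ E]
    (P : Finset ℝ) (hP : ∀ p ∈ P, 1 ≤ p) (hcard : 2 ≤ P.card)
    (x : ℕ → E) (hx : IsPvecSeq (↑P : Set ℝ) Set.univ x) :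
    ∃ A : Set ℕ, A.Infinite ∧ ∃ Q : Finset ℝ, Q ⊆ P ∧ Q.card = 2 ∧
      IsPvecSeq (↑Q : Set ℝ) A x := by
  obtain ⟨A, -, hA, p, hp, q, hq, hpq, hpqA⟩ :=
    statement_19_general P.countable_toSet (Finset.one_lt_card_iff_nontrivial.1 hcard) hx
  exact ⟨A, hA, {p, q}, Finset.insert_subset hp (Finset.singleton_subset_iff.2 hq),
    Finset.card_pair hpq, by rwa [Finset.coe_pair]⟩
end
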